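/- arXiv:1406.6386 — 7 statements merged into one kernel-verified Lean document; each statement's English description precedes it below -/
import Mathlib

section
/- If I and J are two orthogonal countable families of subsets of a countable set N, then I and J are separated. -/
open Set

/-- `a ⊆* b`: all but finitely many elements of `a` belong to `b`. -/
def AlmostSub {N : Type*} (a b : Set N) : Prop := (a \ b).Finite

/-- Two families of sets are orthogonal if any two members intersect in a finite set. -/
def OrthFam {N : Type*} (I J : Set (Set N)) : Prop := ∀ x ∈ I, ∀ y ∈ J, (x ∩ y).Finite

/-- The families `Γ i` are separated if there are sets `a i` with `x ⊆* a i` for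
every `x ∈ Γ i` and `⋂ i, a i` finite. -/
def SepFam {N ι : Type*} (Γ : ι → Set (Set N)) : Prop :=
  ∃ a : ι → Set N, (∀ i, ∀ x ∈ Γ i, (x \ a i).Finite) ∧ (⋂ i, a i).Finite

/-- The families `Γ i` are countably separated. -/
def CSepFam {N ι : Type*} (Γ : ι → Set (Set N)) : Prop :=
  ∃ C : Set (Set N), C.Countable ∧ ∀ x : ι → Set N, (∀ i, x i ∈ Γ i) →
    ∃ c : ι → Set N, (∀ i, c i ∈ C) ∧ (∀ i, x i ⊆ c i) ∧ (⋂ i, c i) = ∅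

/-- A family is infinitely hereditary if every infinite subset of a member is a member. -/
def HerFam {N : Type*} (I : Set (Set N)) : Prop := ∀ x ∈ I, ∀ y ⊆ x, y.Infinite → y ∈ I

/-- `Γ` is an `n∗`-gap. -/
def NStarGap {N ι : Type*} (Γ : ι → Set (Set N)) : Prop :=
  (∀ x : ι → Set N, (∀ i, x i ∈ Γ i) → (⋂ i, x i).Finite) ∧
  ¬ SepFam Γ ∧ (∀ i, HerFam (Γ i))

/-- `Γ` is an `n`-gap: an `n∗`-gap with pairwise orthogonal families. -/
def NGap {N ι : Type*} (Γ : ι → Set (Set N)) : Prop :=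
  NStarGap Γ ∧ ∀ i j, i ≠ j → OrthFam (Γ i) (Γ j)

/-- The orthogonal of a family of sets. -/
def orthFamC {N : Type*} (I : Set (Set N)) : Set (Set N) := {y | ∀ x ∈ I, (x ∩ y).Finite}

/-- A family of subsets of `N`, viewed as a subset of the Cantor space `2^N`,
is analytic. -/
def AnalyticFam {N : Type*} (Γ : Set (Set N)) : Prop :=
  MeasureTheory.AnalyticSet {f : N → Bool | {x | f x = true} ∈ Γ}

/-- A family of subsets of `N`, viewed as a subset of the Cantor space `2^N`, is closed. -/
def ClosedFam {N : Type*} (Γ : Set (Set N)) : Prop :=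
  IsClosed {f : N → Bool | {x | f x = true} ∈ Γ}

/-- The order `≤` between multiple gaps: an injection preserving the families
and their orthogonals. -/
def GapLE {A B ι : Type*} (Γ : ι → Set (Set A)) (Δ : ι → Set (Set B)) : Prop :=
  ∃ φ : A → B, Function.Injective φ ∧ ∀ i,
    (∀ x ∈ Γ i, φ '' x ∈ Δ i) ∧ (∀ y ∈ orthFamC (Γ i), φ '' y ∈ orthFamC (Δ i))

/-- `X` is an `i`-chain in the `n`-adic tree: `X = {x₀,x₁,…}` with `x_k⌢i ≤ x_{k+1}`. -/
def IChain {n : ℕ} (i : Fin n) (X : Set (List (Fin n))) : Prop :=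
  ∃ x : ℕ → List (Fin n), X = Set.range x ∧ ∀ k, (x k ++ [i]) <+: x (k + 1)

/-- `X` is an `[i]`-chain in the `n`-adic tree: `X = {x₀,x₁,…}` with
`x_{k+1} = x_k⌢i⌢w_k` where all entries of `w_k` are `≤ i`. -/
def BChain {n : ℕ} (i : Fin n) (X : Set (List (Fin n))) : Prop :=
  ∃ x : ℕ → List (Fin n), X = Set.range x ∧
    ∀ k, ∃ w : List (Fin n), (∀ j ∈ w, j ≤ i) ∧ x (k + 1) = x k ++ i :: w

/-- Two orthogonal sequences of sets are separated by a single set. -/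
theorem exists_separating_set {N : Type*} (x y : ℕ → Set N)
    (h : ∀ n m, (x n ∩ y m).Finite) :
    ∃ a : Set N, (∀ n, (x n \ a).Finite) ∧ ∀ m, (y m ∩ a).Finite := by
  refine ⟨{p | ∃ n, p ∈ x n ∧ ∀ m ≤ n, p ∉ y m}, fun n => ?_, fun m => ?_⟩
  · refine ((Set.finite_Iic n).biUnion fun m _ => h n m).subset ?_
    rintro p ⟨hp, hpa⟩
    by_contra hc
    refine hpa ⟨n, hp, fun m hm hpm => hc ?_⟩
    exact Set.mem_biUnion (Set.mem_Iic.2 hm) ⟨hp, hpm⟩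
  · refine ((Set.finite_Iio m).biUnion fun n _ => h n m).subset ?_
    rintro p ⟨hp, n, hpn, hn⟩
    exact Set.mem_biUnion (Set.mem_Iio.2 (not_le.1 fun hmn => hn m hmn hp)) ⟨hpn, hp⟩

/-- two orthogonal countable families of subsets of a countable set
are separated. -/
theorem statement_0 (N : Type) [Countable N] [Infinite N] (I J : Set (Set N))
    (hI : I.Countable) (hJ : J.Countable) (horth : OrthFam I J) :
    SepFam ![I, J] := by
  obtain ⟨x, hx⟩ := (hI.insert ∅).exists_eq_range (Set.insert_nonempty _ _)
  obtain ⟨y, hy⟩ := (hJ.insert ∅).exists_eq_range (Set.insert_nonempty _ _)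
  have hxy : ∀ n m, (x n ∩ y m).Finite := fun n m => by
    have hn : x n ∈ insert ∅ I := hx ▸ Set.mem_range_self n
    have hm : y m ∈ insert ∅ J := hy ▸ Set.mem_range_self m
    rcases hn with hn | hn
    · simp [hn]
    rcases hm with hm | hm
    · simp [hm]
    exact horth _ hn _ hm
  obtain ⟨a, hxa, hya⟩ := exists_separating_set x y hxy
  refine ⟨![a, aᶜ], Fin.forall_fin_two.2 ⟨fun u hu => ?_, fun v hv => ?_⟩, ?_⟩
  · obtain ⟨n, rfl⟩ : u ∈ Set.range x := hx ▸ Set.mem_insert_of_mem _ hu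
    exact hxa n
  · obtain ⟨m, rfl⟩ : v ∈ Set.range y := hy ▸ Set.mem_insert_of_mem _ hv
    simpa [Set.sdiff_eq] using hya m
  · refine Set.finite_empty.subset fun p hp => ?_
    rw [Set.mem_iInter, Fin.forall_fin_two] at hp
    exact hp.2 hp.1
end

section
/- There exist two orthogonal families of subsets of ω, each of cardinality ℵ₁, which are not separated (Hausdorff's gap). -/
open Set

/-- `S` is infinite and almost disjoint from every `B i`, and for each `n` only finitely many `B i`
meet `S` inside `{0, …, n - 1}`. -/
structure Diagonalizes {ι : Type*} (B : ι → Set ℕ) (S : Set ℕ) : Prop where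
  infinite : S.Infinite
  finite_inter : ∀ i, (S ∩ B i).Finite
  finite_setOf : ∀ n, {i | S ∩ B i ⊆ Iio n}.Finite

theorem exists_diagonalizes {ι : Type*} [Countable ι] [Infinite ι] (B : ι → Set ℕ)
    (hinf : ∀ i, (B i).Infinite) (hB : ∀ i j, i ≠ j → (B i ∩ B j).Finite) :
    ∃ S, Diagonalizes B S := by
  obtain ⟨f, hf⟩ := exists_injective_nat ι
  have finite_le (n : ℕ) : {i | f i ≤ n}.Finite := (finite_Iic n).preimage hf.injOn
  have exists_point (i : ι) : ∃ p ∈ B i, f i ≤ p ∧ ∀ j, f j < f i → p ∉ B j := by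
    have hfin : ((⋃ j ∈ {j | f j < f i}, B i ∩ B j) ∪ Iio (f i)).Finite := by
      refine Finite.union (Finite.biUnion ?_ fun j hj => hB i j ?_) (finite_Iio _)
      · exact (finite_le (f i)).subset fun j (hj : f j < f i) => hj.le
      · rintro rfl
        exact (show f i < f i from hj).false
    obtain ⟨p, hp, hp'⟩ := (hinf i).exists_notMem_finite hfin
    simp only [mem_union, mem_iUnion, mem_inter_iff, mem_Iio, mem_ofPred_eq, not_or, not_exists,
      not_lt] at hp'
    exact ⟨p, hp, hp'.2, fun j hj hpj => hp'.1 j hj ⟨hp, hpj⟩⟩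
  choose p hpB hfp hp using exists_point
  refine ⟨range p, ?_, fun i => ?_, fun n => ?_⟩
  · intro hfin
    obtain ⟨n, hn⟩ := hfin.bddAbove
    exact infinite_univ ((finite_le n).subset fun i _ => (hfp i).trans (hn ⟨i, rfl⟩))
  · refine ((finite_le (f i)).image p).subset ?_
    rintro _ ⟨⟨j, rfl⟩, hj⟩
    exact ⟨j, not_lt.1 fun h => hp j i h hj, rfl⟩
  · exact (finite_le n).subset fun i hi => (hfp i).trans (le_of_lt (hi ⟨⟨i, rfl⟩, hpB i⟩))

/-- The `n`-th fibre of the first projection under the pairing `ℕ ≃ ℕ × ℕ`. -/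
def natColumn (n : ℕ) : Set ℕ := {m | m.unpair.1 = n}

theorem infinite_natColumn (n : ℕ) : (natColumn n).Infinite := by
  refine infinite_of_injective_forall_mem (f := fun k => Nat.pair n k) (fun a b h => ?_)
    fun k => by simp [natColumn]
  exact (Nat.pair_eq_pair.1 h).2

theorem natColumn_inter_natColumn {m n : ℕ} (h : m ≠ n) : natColumn m ∩ natColumn n = ∅ :=
  eq_empty_of_forall_notMem fun _ hx => h (hx.1.symm.trans hx.2)

/-- Luzin's almost disjoint family, indexed by a well-order with countable initial segments. -/
theorem exists_luzin_family {T : Type*} [LinearOrder T] [WellFoundedLT T]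
    (hT : ∀ α : T, (Iio α).Countable) :
    ∃ A : T → Set ℕ, (∀ α, (A α).Infinite) ∧ (∀ α β, α ≠ β → (A α ∩ A β).Finite) ∧
      ∀ α n, {β | β < α ∧ A α ∩ A β ⊆ Iio n}.Finite := by
  let A : T → Set ℕ := IsWellFounded.fix (· < ·) fun α F =>
    Classical.epsilon (Diagonalizes (Sum.elim natColumn fun β : Iio α => F β β.2))
  have hA (α : T) : A α =
      Classical.epsilon (Diagonalizes (Sum.elim natColumn fun β : Iio α => A β)) :=
    IsWellFounded.fix_eq _ _ α
  have key (α : T) : Diagonalizes (Sum.elim natColumn fun β : Iio α => A β) (A α) := by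
    induction α using WellFoundedLT.induction with
    | ind α ih =>
      have : Countable (Iio α) := (hT α).to_subtype
      rw [hA α]
      refine Classical.epsilon_spec (exists_diagonalizes _ ?_ ?_)
      · rintro (n | β)
        · exact infinite_natColumn n
        · exact (ih β β.2).infinite
      · rintro (m | ⟨β, hβ⟩) (n | ⟨γ, hγ⟩) hne
        · simp [natColumn_inter_natColumn fun h => hne (congrArg _ h)]
        · rw [inter_comm]
          exact (ih γ hγ).finite_inter (Sum.inl m)
        · exact (ih β hβ).finite_inter (Sum.inl n)
        · rcases lt_trichotomy β γ with h | rfl | h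
          · rw [inter_comm]
            exact (ih γ hγ).finite_inter (Sum.inr ⟨β, h⟩)
          · exact absurd rfl hne
          · exact (ih β hβ).finite_inter (Sum.inr ⟨γ, h⟩)
  refine ⟨A, fun α => (key α).infinite, fun α β hne => ?_, fun α n => ?_⟩
  · rcases hne.lt_or_gt with h | h
    · rw [inter_comm]
      exact (key β).finite_inter (Sum.inr ⟨α, h⟩)
    · exact (key α).finite_inter (Sum.inr ⟨β, h⟩)
  · have hpre := ((key α).finite_setOf n).preimage Sum.inr_injective.injOn
    refine (hpre.image Subtype.val).subset ?_
    rintro β ⟨hβ, hsub⟩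
    exact ⟨⟨β, hβ⟩, hsub, rfl⟩

theorem exists_not_countable_fiber {T : Type*} [Uncountable T] (f : T → ℕ) :
    ∃ n, ¬ (f ⁻¹' {n}).Countable := by
  by_contra! h
  refine not_countable_univ (α := T) ?_
  exact (countable_iUnion h).mono fun x _ => mem_iUnion.2 ⟨f x, rfl⟩

/-- Given uncountably many sets almost contained in `a`, uncountably many of them are contained in
`a` above a fixed bound. -/
theorem exists_not_countable_diff_subset {T : Type*} [Uncountable T] (X : T → Set ℕ) (a : Set ℕ)
    (h : ∀ t, (X t \ a).Finite) : ∃ n, ¬ {t | X t \ a ⊆ Iio n}.Countable := by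
  have hbound (t : T) : ∃ n, X t \ a ⊆ Iio n := by
    obtain ⟨n, hn⟩ := (h t).bddAbove
    exact ⟨n + 1, fun x hx => Nat.lt_succ_of_le (hn hx)⟩
  choose f hf using hbound
  obtain ⟨n, hn⟩ := exists_not_countable_fiber f
  refine ⟨n, fun hc => hn (hc.mono ?_)⟩
  rintro t rfl
  exact hf t

/-- Two uncountable parts of a Luzin family contain members with intersections reaching
arbitrarily far. -/
theorem exists_inter_not_subset_Iio {T : Type*} [LinearOrder T] (hT : ∀ α : T, (Iio α).Countable)
    {A : T → Set ℕ} (hA : ∀ α n, {β | β < α ∧ A α ∩ A β ⊆ Iio n}.Finite) {U V : Set T}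
    (hU : ¬ U.Countable) (hV : ¬ V.Countable) (n : ℕ) :
    ∃ α ∈ U, ∃ β ∈ V, ¬ A α ∩ A β ⊆ Iio n := by
  by_contra! h
  have hUinf : U.Infinite := fun hfin => hU hfin.countable
  obtain ⟨D, hDU, hD, hDinf⟩ := hUinf.exists_subset_countable_infinite
  have hIic : (⋃ α ∈ D, Iic α).Countable := hD.biUnion fun α _ => by
    rw [← Iio_insert]
    exact (hT α).insert α
  obtain ⟨β, hβV, hβ⟩ := not_subset.1 fun hsub => hV (hIic.mono hsub)
  simp only [mem_iUnion, mem_Iic, not_exists, not_le] at hβ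
  refine hDinf ((hA β n).subset fun α hα => ⟨hβ α hα, ?_⟩)
  rw [inter_comm]
  exact h α (hDU hα) β hβV

/-- Hausdorff's gap: two orthogonal families of subsets of ω,
each of cardinality ℵ₁, which are not separated. -/
theorem statement_1 :
    ∃ I J : Set (Set ℕ),
      Cardinal.mk I = Cardinal.aleph 1 ∧ Cardinal.mk J = Cardinal.aleph 1 ∧
      OrthFam I J ∧ ¬ SepFam ![I, J] := by
  let T : Type := (Cardinal.aleph 1).ord.ToType
  have hcard : Cardinal.mk T = Cardinal.aleph 1 := Cardinal.mk_ord_toType _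
  have hT (α : T) : (Iio α).Countable := by
    rw [← Cardinal.le_aleph0_iff_set_countable, ← Cardinal.lt_aleph_one_iff]
    exact (Cardinal.mk_Iio_lt α (by rw [hcard, Ordinal.type_toType])).trans_eq hcard
  have : Uncountable T := by
    rw [← Cardinal.aleph0_lt_mk_iff, hcard]
    exact Cardinal.aleph0_lt_aleph_one
  obtain ⟨e⟩ : Nonempty (T ⊕ T ≃ T) := by
    rw [← Cardinal.eq, Cardinal.mk_sum, Cardinal.lift_id, hcard]
    exact Cardinal.add_eq_self (Cardinal.aleph0_le_aleph 1)
  obtain ⟨A, hinf, had, hluzin⟩ := exists_luzin_family hT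
  have hinj : Function.Injective A := fun α β h => by
    by_contra hne
    have := had α β hne
    rw [← h, inter_self] at this
    exact hinf α this
  have hl : Function.Injective fun t : T => e (Sum.inl t) := e.injective.comp Sum.inl_injective
  have hr : Function.Injective fun t : T => e (Sum.inr t) := e.injective.comp Sum.inr_injective
  refine ⟨range fun t => A (e (Sum.inl t)), range fun t => A (e (Sum.inr t)), ?_, ?_, ?_, ?_⟩
  · rw [← hcard]
    exact Cardinal.mk_range_eq _ (hinj.comp hl)
  · rw [← hcard]
    exact Cardinal.mk_range_eq _ (hinj.comp hr)
  · rintro _ ⟨s, rfl⟩ _ ⟨t, rfl⟩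
    exact had _ _ fun h => Sum.inl_ne_inr (e.injective h)
  · rintro ⟨a, ha, hfin⟩
    obtain ⟨m, hm⟩ := exists_not_countable_diff_subset _ (a 0) fun t => ha 0 _ ⟨t, rfl⟩
    obtain ⟨n, hn⟩ := exists_not_countable_diff_subset _ (a 1) fun t => ha 1 _ ⟨t, rfl⟩
    obtain ⟨k, hk⟩ := hfin.bddAbove
    obtain ⟨_, ⟨s, hs, rfl⟩, _, ⟨t, ht, rfl⟩, hst⟩ := exists_inter_not_subset_Iio hT hluzin
      (fun hc => hm (countable_of_injective_of_countable_image hl.injOn hc))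
      (fun hc => hn (countable_of_injective_of_countable_image hr.injOn hc)) (max (max m n) (k + 1))
    refine hst fun x hx => ?_
    by_contra hlt
    simp only [mem_Iio, not_lt, max_le_iff] at hlt
    have h0 : x ∈ a 0 := by_contra fun h => (hlt.1.1.trans_lt (hs ⟨hx.1, h⟩)).false
    have h1 : x ∈ a 1 := by_contra fun h => (hlt.1.2.trans_lt (ht ⟨hx.2, h⟩)).false
    have := hk (mem_iInter.2 (Fin.forall_fin_two.2 ⟨h0, h1⟩))
    omega
end

section
/- Assume MA_{ℵ₁}. If n > 2 and Γ₀,…,Γ_{n−1} are pairwise orthogonal families of subsets of a countable set N, each of cardinality ℵ₁, then the families Γ₀,…,Γ_{n−1} are separated. -/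
open Set

/-- A partial order is ccc if every antichain (set of pairwise incompatible
elements) is countable. -/
def CccOrder (P : Type*) [PartialOrder P] : Prop :=
  ∀ A : Set P, (∀ p ∈ A, ∀ q ∈ A, p ≠ q → ¬ ∃ r, r ≤ p ∧ r ≤ q) → A.Countable

/-- A filter on a partial order: nonempty, upward closed, downward directed. -/
def PosetFilter {P : Type*} [PartialOrder P] (G : Set P) : Prop :=
  G.Nonempty ∧ (∀ p ∈ G, ∀ q, p ≤ q → q ∈ G) ∧
    (∀ p ∈ G, ∀ q ∈ G, ∃ r ∈ G, r ≤ p ∧ r ≤ q)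

/-- Martin's axiom at ℵ₁: for every nonempty ccc partial order and every family of at
most ℵ₁ many dense subsets, there is a filter meeting every member of the family. -/
def MAAleph1 : Prop :=
  ∀ (P : Type) [inst : PartialOrder P], Nonempty P → CccOrder P →
    ∀ 𝒟 : Set (Set P), Cardinal.mk 𝒟 ≤ Cardinal.aleph 1 →
      (∀ D ∈ 𝒟, ∀ p : P, ∃ q ∈ D, q ≤ p) →
      ∃ G : Set P, PosetFilter G ∧ ∀ D ∈ 𝒟, (G ∩ D).Nonempty

/-- A finite approximation to a colouring of `N` by `ι` which, on each `X k`, uses the colour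
`col k` only finitely often. The finite set `s` records the colours assigned so far, and `F` the
indices `k` for which `col k` may no longer be assigned to new points of `X k`. -/
@[ext]
structure ColCond {N ι κ : Type} (X : κ → Set N) (col : κ → ι) where
  s : Finset (N × ι)
  F : Finset κ
  covered : ∀ j ∈ F, ∀ k ∈ F, col j ≠ col k → ∀ m ∈ X j, m ∈ X k → ∃ c, (m, c) ∈ s

namespace ColCond

variable {N ι κ : Type} {X : κ → Set N} {col : κ → ι}

instance : PartialOrder (ColCond X col) where
  le q p := p.s ⊆ q.s ∧ p.F ⊆ q.F ∧
    ∀ k ∈ p.F, ∀ m ∈ X k, (m, col k) ∈ q.s → (m, col k) ∈ p.s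
  le_refl p := ⟨subset_rfl, subset_rfl, fun _ _ _ _ h => h⟩
  le_trans r q p hrq hqp := ⟨hqp.1.trans hrq.1, hqp.2.1.trans hrq.2.1,
    fun k hk m hm h => hqp.2.2 k hk m hm (hrq.2.2 k (hqp.2.1 hk) m hm h)⟩
  le_antisymm p q hpq hqp := ColCond.ext (hqp.1.antisymm hpq.1) (hqp.2.1.antisymm hpq.2.1)

/-- At a point not yet coloured, each of two conditions with the same finite part forbids at most
one colour, so a third colour is allowed by both. -/
theorem exists_free_color [Fintype ι] (hι : 2 < Fintype.card ι) {p q : ColCond X col}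
    (hs : p.s = q.s) {m : N} (hm : ∀ c, (m, c) ∉ p.s) :
    ∃ c, (∀ k ∈ p.F, m ∈ X k → col k ≠ c) ∧ ∀ k ∈ q.F, m ∈ X k → col k ≠ c := by
  classical
  have forbid : ∀ r : ColCond X col, (∀ c, (m, c) ∉ r.s) →
      ({c | ∃ k ∈ r.F, m ∈ X k ∧ col k = c} : Finset ι).card ≤ 1 := by
    intro r hr
    refine Finset.card_le_one.2 ?_
    simp only [Finset.mem_filter, Finset.mem_univ, true_and]
    rintro _ ⟨j, hj, hmj, rfl⟩ _ ⟨k, hk, hmk, rfl⟩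
    by_contra hne
    obtain ⟨c, hc⟩ := r.covered j hj k hk hne m hmj hmk
    exact hr c hc
  have hp := forbid p hm
  have hq := forbid q (hs ▸ hm)
  obtain ⟨c, hc⟩ : ∃ c, c ∉ ({c | ∃ k ∈ p.F, m ∈ X k ∧ col k = c} : Finset ι) ∪
      ({c | ∃ k ∈ q.F, m ∈ X k ∧ col k = c} : Finset ι) := by
    by_contra! h
    have := Finset.card_union_le ({c | ∃ k ∈ p.F, m ∈ X k ∧ col k = c} : Finset ι)
      ({c | ∃ k ∈ q.F, m ∈ X k ∧ col k = c} : Finset ι)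
    rw [Finset.eq_univ_iff_forall.2 h, Finset.card_univ] at this
    omega
  refine ⟨c, fun k hk hmk hkc => hc ?_, fun k hk hmk hkc => hc ?_⟩
  · exact Finset.mem_union_left _ (by simpa using ⟨k, hk, hmk, hkc⟩)
  · exact Finset.mem_union_right _ (by simpa using ⟨k, hk, hmk, hkc⟩)

/-- Two conditions with the same finite part have a common extension colouring any given point. -/
theorem exists_le_le_colored [Fintype ι] (hι : 2 < Fintype.card ι)
    (hX : ∀ j k, col j ≠ col k → (X j ∩ X k).Finite) (p q : ColCond X col) (hs : p.s = q.s)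
    (a : N) : ∃ r ≤ p, r ≤ q ∧ ∃ c, (a, c) ∈ r.s := by
  classical
  have hT : (insert a (⋃ j ∈ p.F ∪ q.F, ⋃ k ∈ p.F ∪ q.F,
      {m | col j ≠ col k ∧ m ∈ X j ∩ X k})).Finite := by
    refine Set.Finite.insert _ ((p.F ∪ q.F).finite_toSet.biUnion fun j _ =>
      (p.F ∪ q.F).finite_toSet.biUnion fun k _ => ?_)
    by_cases h : col j = col k
    · simp [h]
    · exact (hX j k h).subset fun m hm => hm.2
  have hfree : ∀ m, ∃ c, (∀ c, (m, c) ∉ p.s) →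
      (∀ k ∈ p.F, m ∈ X k → col k ≠ c) ∧ ∀ k ∈ q.F, m ∈ X k → col k ≠ c := by
    have : Nonempty ι := Fintype.card_pos_iff.1 (by omega)
    intro m
    by_cases hm : ∀ c, (m, c) ∉ p.s
    · obtain ⟨c, hc⟩ := exists_free_color hι hs hm
      exact ⟨c, fun _ => hc⟩
    · exact ⟨Classical.arbitrary ι, fun h => absurd h hm⟩
  choose g hg using hfree
  let s' : Finset (N × ι) :=
    p.s ∪ (hT.toFinset.filter fun m => ∀ c, (m, c) ∉ p.s).image fun m => (m, g m)
  have mem_s' : ∀ m c, (m, c) ∈ s' → (m, c) ∈ p.s ∨ (∀ c, (m, c) ∉ p.s) ∧ g m = c := by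
    intro m c h
    rcases Finset.mem_union.1 h with h | h
    · exact Or.inl h
    · obtain ⟨m', hm', he⟩ := Finset.mem_image.1 h
      obtain ⟨rfl, rfl⟩ := Prod.mk.inj he
      exact Or.inr ⟨(Finset.mem_filter.1 hm').2, rfl⟩
  have colored : ∀ m ∈ hT.toFinset, ∃ c, (m, c) ∈ s' := by
    intro m hm
    by_cases h : ∀ c, (m, c) ∉ p.s
    · exact ⟨g m, Finset.mem_union_right _
        (Finset.mem_image_of_mem _ (Finset.mem_filter.2 ⟨hm, h⟩))⟩
    · push Not at h
      obtain ⟨c, hc⟩ := h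
      exact ⟨c, Finset.mem_union_left _ hc⟩
  refine ⟨⟨s', p.F ∪ q.F, fun j hj k hk hne m hmj hmk => colored m ?_⟩,
    ⟨Finset.subset_union_left, Finset.subset_union_left, fun k hk m hm h => ?_⟩,
    ⟨hs.symm.subset.trans Finset.subset_union_left, Finset.subset_union_right,
      fun k hk m hm h => ?_⟩,
    colored a (by simp)⟩
  · rw [Set.Finite.mem_toFinset]
    exact Or.inr (Set.mem_biUnion hj (Set.mem_biUnion hk ⟨hne, hmj, hmk⟩))
  · rcases mem_s' _ _ h with h | ⟨h, hc⟩
    · exact h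
    · exact absurd hc.symm ((hg m h).1 k hk hm)
  · rcases mem_s' _ _ h with h | ⟨h, hc⟩
    · exact hs ▸ h
    · exact absurd hc.symm ((hg m h).2 k hk hm)

theorem cccOrder [Countable N] [Fintype ι] [Nonempty N] (hι : 2 < Fintype.card ι)
    (hX : ∀ j k, col j ≠ col k → (X j ∩ X k).Finite) : CccOrder (ColCond X col) := by
  intro A hA
  refine (Set.mapsTo_univ s A).countable_of_injOn ?_ (Set.to_countable _)
  intro p hp q hq hs
  by_contra hne
  obtain ⟨r, hrp, hrq, -⟩ := exists_le_le_colored hι hX p q hs (Classical.arbitrary N)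
  exact hA p hp q hq hne ⟨r, hrp, hrq⟩

end ColCond

/-- Under `MA_{ℵ₁}`, given at most `ℵ₁` sets `X k` labelled by at least three colours, such that
sets with different labels are almost disjoint, `N` is covered by sets `C i` such that `C i` is
almost disjoint from every set labelled `i`. -/
theorem MAAleph1.exists_cover (hMA : MAAleph1) {N ι κ : Type} [Countable N] [Nonempty N]
    [Fintype ι] (hι : 2 < Fintype.card ι) (X : κ → Set N) (col : κ → ι)
    (hκ : Cardinal.mk κ ≤ Cardinal.aleph 1)
    (hX : ∀ j k, col j ≠ col k → (X j ∩ X k).Finite) :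
    ∃ C : ι → Set N, (⋃ i, C i) = Set.univ ∧ ∀ k, (X k ∩ C (col k)).Finite := by
  classical
  let D : N ⊕ κ → Set (ColCond X col) :=
    Sum.elim (fun m => {p | ∃ c, (m, c) ∈ p.s}) (fun k => {p | k ∈ p.F})
  have hcard : Cardinal.mk (Set.range D) ≤ Cardinal.aleph 1 := by
    refine Cardinal.mk_range_le.trans ?_
    rw [Cardinal.mk_sum, Cardinal.lift_id, Cardinal.lift_id]
    exact Cardinal.add_le_of_le (Cardinal.aleph0_le_aleph 1)
      (Cardinal.mk_le_aleph0.trans (Cardinal.aleph0_le_aleph 1)) hκ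
  have hdense : ∀ E ∈ Set.range D, ∀ p : ColCond X col, ∃ q ∈ E, q ≤ p := by
    rintro _ ⟨m | k, rfl⟩ p
    · obtain ⟨r, hrp, -, hr⟩ := ColCond.exists_le_le_colored hι hX p p rfl m
      exact ⟨r, hr, hrp⟩
    · let q : ColCond X col := ⟨p.s, {k}, fun i hi j hj hne => by simp_all⟩
      obtain ⟨r, hrp, hrq, -⟩ :=
        ColCond.exists_le_le_colored hι hX p q rfl (Classical.arbitrary N)
      exact ⟨r, hrq.2.1 (Finset.mem_singleton_self k), hrp⟩
  obtain ⟨G, ⟨-, -, hdir⟩, hG⟩ := hMA (ColCond X col) ⟨⟨∅, ∅, by simp⟩⟩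
    (ColCond.cccOrder hι hX) (Set.range D) hcard hdense
  refine ⟨fun i => {m | ∃ p ∈ G, (m, i) ∈ p.s}, Set.eq_univ_of_forall fun m => ?_, fun k => ?_⟩
  · obtain ⟨p, hp, c, hc⟩ := hG _ ⟨Sum.inl m, rfl⟩
    exact Set.mem_iUnion.2 ⟨c, p, hp, hc⟩
  · obtain ⟨p, hp, hk⟩ := hG _ ⟨Sum.inr k, rfl⟩
    refine (p.s.image Prod.fst).finite_toSet.subset ?_
    rintro m ⟨hm, q, hq, hmq⟩
    obtain ⟨r, -, hrp, hrq⟩ := hdir p hp q hq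
    exact Finset.mem_image_of_mem Prod.fst (hrp.2.2 k hk m hm (hrq.1 hmq))

/-- under MA_{ℵ₁}, if n > 2 and Γ₀,…,Γ_{n−1} are pairwise orthogonal
families of subsets of a countable set N, each of cardinality ℵ₁, then they are
separated. -/
theorem statement_2 (hMA : MAAleph1) (n : ℕ) (hn : 2 < n)
    (N : Type) [Countable N] [Infinite N] (Γ : Fin n → Set (Set N))
    (hcard : ∀ i, Cardinal.mk (Γ i) = Cardinal.aleph 1)
    (horth : ∀ i j, i ≠ j → OrthFam (Γ i) (Γ j)) :
    SepFam Γ := by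
  have hκ : Cardinal.mk (Σ i, Γ i) ≤ Cardinal.aleph 1 := by
    rw [Cardinal.mk_sigma]
    simp only [hcard, Cardinal.sum_const, Cardinal.lift_id, Cardinal.mk_fin]
    exact Cardinal.mul_le_of_le (Cardinal.aleph0_le_aleph 1)
      ((Cardinal.natCast_lt_aleph0).le.trans (Cardinal.aleph0_le_aleph 1)) le_rfl
  obtain ⟨C, hC, hfin⟩ := hMA.exists_cover (by simpa using hn)
    (fun k : Σ i, Γ i => (k.2 : Set N)) Sigma.fst hκ
    fun j k hjk => horth _ _ hjk _ j.2.2 _ k.2.2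
  refine ⟨fun i => (C i)ᶜ, fun i x hx => ?_, ?_⟩
  · rw [Set.sdiff_compl]
    exact hfin ⟨i, x, hx⟩
  · rw [← Set.compl_iUnion, hC, Set.compl_univ]
    exact Set.finite_empty
end

section
/- For every n ≥ 2, the collection 𝒞ⁿ = {𝒞ⁿ_i : i < n}, where 𝒞ⁿ_i is the family of all [i]-chains of the n-adic tree n^{<ω}, is an n-gap: the families 𝒞ⁿ_i are infinitely hereditary and pairwise orthogonal, any choice of x_i ∈ 𝒞ⁿ_i (i < n) has finite intersection, and the families {𝒞ⁿ_i : i < n} are not separated. -/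
open Set

/-- Along a sequence witnessing an `[i]`-chain, any later term extends any earlier term by a word
that starts with `i` and has all its entries `≤ i`. -/
lemma bchain_seq_extends {n : ℕ} {i : Fin n} {x : ℕ → List (Fin n)}
    (hx : ∀ k, ∃ w : List (Fin n), (∀ j ∈ w, j ≤ i) ∧ x (k + 1) = x k ++ i :: w)
    {k m : ℕ} (hkm : k < m) :
    ∃ w : List (Fin n), (∀ j ∈ w, j ≤ i) ∧ x m = x k ++ i :: w := by
  induction m, hkm using Nat.le_induction with
  | base => exact hx k
  | succ m _ ih =>
    obtain ⟨w, hw, hxm⟩ := ih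
    obtain ⟨v, hv, hxv⟩ := hx m
    refine ⟨w ++ i :: v, ?_, by simp [hxv, hxm]⟩
    intro j hj
    rcases List.mem_append.1 hj with hj | hj
    · exact hw j hj
    · rcases List.mem_cons.1 hj with rfl | hj
      · exact le_rfl
      · exact hv j hj

/-- Of two distinct members of an `[i]`-chain, the longer one extends the shorter one by a word
that starts with `i`. -/
lemma BChain.extends_of_length_le {n : ℕ} {i : Fin n} {X : Set (List (Fin n))} (hX : BChain i X)
    {s t : List (Fin n)} (hs : s ∈ X) (ht : t ∈ X) (hst : s ≠ t) (hlen : s.length ≤ t.length) :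
    ∃ w : List (Fin n), t = s ++ i :: w := by
  obtain ⟨x, rfl, hx⟩ := hX
  obtain ⟨k, rfl⟩ := hs
  obtain ⟨m, rfl⟩ := ht
  rcases lt_trichotomy k m with h | rfl | h
  · obtain ⟨w, -, hw⟩ := bchain_seq_extends hx h
    exact ⟨w, hw⟩
  · exact absurd rfl hst
  · obtain ⟨w, -, hw⟩ := bchain_seq_extends hx h
    simp [hw] at hlen

/-- An `[i]`-chain and a `[j]`-chain with `i ≠ j` share at most one point. -/
lemma BChain.inter_subsingleton {n : ℕ} {i j : Fin n} (hij : i ≠ j) {X Y : Set (List (Fin n))}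
    (hX : BChain i X) (hY : BChain j Y) : (X ∩ Y).Subsingleton := by
  intro s hs t ht
  by_contra hst
  wlog hlen : s.length ≤ t.length generalizing s t
  · exact this ht hs (Ne.symm hst) (le_of_not_ge hlen)
  obtain ⟨w, rfl⟩ := hX.extends_of_length_le hs.1 ht.1 hst hlen
  obtain ⟨v, hv⟩ := hY.extends_of_length_le hs.2 ht.2 hst hlen
  exact hij (List.cons.inj (List.append_cancel_left hv)).1

/-- Infinite subsets of `[i]`-chains are `[i]`-chains. -/
lemma BChain.subset_of_infinite {n : ℕ} {i : Fin n} {X Y : Set (List (Fin n))} (hX : BChain i X)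
    (hYX : Y ⊆ X) (hY : Y.Infinite) : BChain i Y := by
  obtain ⟨x, rfl, hx⟩ := hX
  have himage : x '' {k | x k ∈ Y} = Y := Set.image_preimage_eq_of_subset hYX
  have hinf : {k | x k ∈ Y}.Infinite := by
    intro hfin
    exact hY (himage ▸ hfin.image x)
  refine ⟨x ∘ Nat.nth (fun k => x k ∈ Y), ?_, fun k => ?_⟩
  · rw [Set.range_comp, Nat.range_nth_of_infinite hinf, himage]
  · exact bchain_seq_extends hx (Nat.nth_strictMono hinf k.lt_succ_self)

/-- If `a` almost contains every `[i]`-chain, then every node `s` can be extended by entries `≤ i`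
to a node all of whose further extensions by entries `≤ i` belong to `a`. -/
lemma exists_extension_forall_mem {n : ℕ} {i : Fin n} {a : Set (List (Fin n))}
    (ha : ∀ X, BChain i X → (X \ a).Finite) (s : List (Fin n)) :
    ∃ w : List (Fin n), (∀ j ∈ w, j ≤ i) ∧
      ∀ v : List (Fin n), (∀ j ∈ v, j ≤ i) → s ++ w ++ v ∈ a := by
  by_contra! hcon
  have hstep : ∀ w : {w : List (Fin n) // ∀ j ∈ w, j ≤ i},
      ∃ w' : {w : List (Fin n) // ∀ j ∈ w, j ≤ i}, s ++ w'.1 ∉ a ∧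
        ∃ v : List (Fin n), (∀ j ∈ v, j ≤ i) ∧ w'.1 = w.1 ++ i :: v := by
    rintro ⟨w, hw⟩
    have hwi : ∀ j ∈ w ++ [i], j ≤ i := by
      intro j hj
      rcases List.mem_append.1 hj with hj | hj
      · exact hw j hj
      · exact (List.mem_singleton.1 hj).le
    obtain ⟨v, hv, hva⟩ := hcon (w ++ [i]) hwi
    refine ⟨⟨w ++ [i] ++ v, fun j hj => ?_⟩, by simpa using hva, v, hv, by simp⟩
    exact (List.mem_append.1 hj).elim (hwi j) (hv j)
  choose next hnext hext using hstep
  let y : ℕ → {w : List (Fin n) // ∀ j ∈ w, j ≤ i} :=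
    fun k => next^[k + 1] ⟨[], by simp⟩
  have hy : ∀ k, y (k + 1) = next (y k) := fun k => Function.iterate_succ_apply' _ _ _
  have hya : ∀ k, s ++ (y k).1 ∉ a := by
    intro k
    simp only [y, Function.iterate_succ_apply']
    exact hnext _
  have hx : ∀ k, ∃ v : List (Fin n), (∀ j ∈ v, j ≤ i) ∧
      s ++ (y (k + 1)).1 = (s ++ (y k).1) ++ i :: v := by
    intro k
    obtain ⟨v, hv, hvk⟩ := hext (y k)
    exact ⟨v, hv, by rw [hy, hvk, List.append_assoc]⟩
  have hinj : Function.Injective fun k => s ++ (y k).1 := by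
    have hmono : StrictMono fun k => (s ++ (y k).1).length := by
      refine strictMono_nat_of_lt_succ fun k => ?_
      obtain ⟨v, -, hv⟩ := hx k
      simp [hv]
    exact Function.Injective.of_comp (f := List.length) hmono.injective
  have hfin := ha _ ⟨fun k => s ++ (y k).1, rfl, hx⟩
  refine Set.infinite_range_of_injective hinj (hfin.subset ?_)
  rintro _ ⟨k, rfl⟩
  exact ⟨⟨k, rfl⟩, hya k⟩

/-- If each `a i` almost contains every `[i]`-chain, then above every node there is a point of
`⋂ i, a i`. -/
lemma exists_prefix_mem_iInter {n : ℕ} {a : Fin n → Set (List (Fin n))}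
    (ha : ∀ i, ∀ X, BChain i X → (X \ a i).Finite) (s : List (Fin n)) :
    ∃ t ∈ ⋂ i, a i, s <+: t := by
  have key : ∀ m ≤ n, ∃ t : List (Fin n), s <+: t ∧ ∀ i : Fin n, m ≤ i →
      ∀ v : List (Fin n), (∀ j ∈ v, (j : ℕ) < m) → t ++ v ∈ a i := by
    intro m hm
    induction hm using Nat.decreasingInduction with
    | self => exact ⟨s, List.prefix_rfl, fun i hi => absurd i.2 hi.not_gt⟩
    | of_succ m hm ih =>
      obtain ⟨t, hst, ht⟩ := ih
      obtain ⟨w, hw, hwa⟩ := exists_extension_forall_mem (ha ⟨m, hm⟩) t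
      refine ⟨t ++ w, hst.trans (List.prefix_append _ _), fun i hi v hv => ?_⟩
      rcases hi.eq_or_lt with hi | hi
      · obtain rfl : i = ⟨m, hm⟩ := Fin.ext hi.symm
        exact hwa v fun j hj => Fin.le_def.2 (hv j hj).le
      · rw [List.append_assoc]
        refine ht i hi _ fun j hj => ?_
        rcases List.mem_append.1 hj with hj | hj
        · exact Nat.lt_succ_of_le (Fin.le_def.1 (hw j hj))
        · exact (hv j hj).trans m.lt_succ_self
  obtain ⟨t, hst, ht⟩ := key 0 n.zero_le
  exact ⟨t, Set.mem_iInter.2 fun i => by simpa using ht i (Nat.zero_le _) [] (by simp), hst⟩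

/-- The families of `[i]`-chains are not separated. -/
lemma not_sepFam_bchain {n : ℕ} (hn : 0 < n) :
    ¬ SepFam (fun i : Fin n => {X | BChain i X}) := by
  rintro ⟨a, ha, hfin⟩
  obtain ⟨M, hM⟩ := (hfin.image List.length).bddAbove
  obtain ⟨t, ht, hpre⟩ :=
    exists_prefix_mem_iInter ha (List.replicate (M + 1) (⟨0, hn⟩ : Fin n))
  have hle := hpre.length_le
  rw [List.length_replicate] at hle
  exact absurd (hM ⟨t, ht, rfl⟩) (Nat.not_le.2 hle)

/-- for n ≥ 2, the families 𝒞ⁿ_i of [i]-chains of the n-adic tree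
form an n-gap: infinitely hereditary, pairwise orthogonal, choices have finite
intersection, and the families are not separated. -/
theorem statement_3 (n : ℕ) (hn : 2 ≤ n) :
    (∀ i : Fin n, HerFam {X | BChain i X}) ∧
    (∀ i j : Fin n, i ≠ j → OrthFam {X | BChain i X} {X | BChain j X}) ∧
    (∀ x : Fin n → Set (List (Fin n)), (∀ i, BChain i (x i)) → (⋂ i, x i).Finite) ∧
    ¬ SepFam (fun i : Fin n => {X | BChain i X}) := by
  refine ⟨fun i X hX Y hYX hY => BChain.subset_of_infinite hX hYX hY,
    fun i j hij X hX Y hY => (BChain.inter_subsingleton hij hX hY).finite,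
    fun x hx => ?_, not_sepFam_bchain (by omega)⟩
  have h01 : (⟨0, by omega⟩ : Fin n) ≠ ⟨1, by omega⟩ := by simp
  exact (BChain.inter_subsingleton h01 (hx _) (hx _)).finite.subset
    (Set.subset_inter (Set.iInter_subset _ _) (Set.iInter_subset _ _))
end

section
/- If Γ = {Γ_i : i < n} is an analytic n∗-gap on a countable set N, then there exist an injective function φ : n^{<ω} → N and a permutation ε of {0,…,n−1} such that for every i < n and every [i]-chain X ⊆ n^{<ω}, the image φ(X) = {φ(s) : s ∈ X} belongs to Γ_{ε(i)}. -/
open Set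

/-- The tree `k^{<ω}` maps into `A` so that every `[i]`-chain has infinite image in `Γ i`. -/
def CritOn {N : Type*} {k : ℕ} (Γ : Fin k → Set (Set N)) (A : Set N) : Prop :=
  ∃ φ : List (Fin k) → N, (∀ s, φ s ∈ A) ∧
    ∀ i X, BChain i X → φ '' X ∈ Γ i ∧ (φ '' X).Infinite

/-- The families `Γ i`, `i ∈ S`, restricted to `A` are separated by sets with no common
point in `A`. -/
def SepOn {N ι : Type*} (Γ : ι → Set (Set N)) (S : Finset ι) (A : Set N) : Prop :=
  ∃ a : ι → Set N, (∀ i ∈ S, ∀ x ∈ Γ i, x ⊆ A → (x \ a i).Finite) ∧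
    ∀ p ∈ A, ∃ i ∈ S, p ∉ a i

/-- The sets `g z`, `z ∈ U`, are almost contained in members of a countable family of sets
on which `Γ` is not critical. -/
def CountablyCovered {N Z : Type*} {k : ℕ} (Γ : Fin k → Set (Set N)) (g : Z → Set N)
    (U : Set Z) : Prop :=
  ∃ C : Set (Set N), C.Countable ∧ (∀ c ∈ C, ¬ CritOn Γ c) ∧
    ∀ z ∈ U, ∃ c ∈ C, (g z \ c).Finite

theorem CritOn.mono {N : Type*} {k : ℕ} {Γ : Fin k → Set (Set N)} {A B : Set N}
    (h : CritOn Γ A) (hAB : A ⊆ B) : CritOn Γ B := by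
  obtain ⟨φ, hA, hφ⟩ := h
  exact ⟨φ, fun s => hAB (hA s), hφ⟩

theorem exists_map_castSucc {k : ℕ} (i : Fin k) (w : List (Fin (k + 1)))
    (hw : ∀ j ∈ w, j ≤ i.castSucc) :
    ∃ v : List (Fin k), w = v.map Fin.castSucc ∧ ∀ j ∈ v, j ≤ i := by
  induction w with
  | nil => exact ⟨[], rfl, by simp⟩
  | cons a w ih =>
    obtain ⟨v, rfl, hv⟩ := ih fun j hj => hw j (List.mem_cons_of_mem _ hj)
    have ha : a ≤ i.castSucc := hw a List.mem_cons_self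
    refine ⟨a.castLT (lt_of_le_of_lt (Fin.le_def.1 ha) i.2) :: v, by simp, ?_⟩
    intro j hj
    rcases List.mem_cons.1 hj with rfl | hj
    · exact Fin.le_def.2 (Fin.le_def.1 ha)
    · exact hv j hj

theorem exists_cylinder_subset {V : Set (ℕ → ℕ)} (hV : IsOpen V) {y : ℕ → ℕ} (hy : y ∈ V) :
    ∃ m, PiNat.cylinder y m ⊆ V := by
  obtain ⟨c, ⟨x, m, rfl⟩, hyc, hcV⟩ :=
    (PiNat.isTopologicalBasis_cylinders (fun _ : ℕ => ℕ)).exists_subset_of_mem_open hy hV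
  exact ⟨m, (PiNat.mem_cylinder_iff_eq.1 hyc).trans_subset hcV⟩

/-- Nested cylinders of increasing length have a common point. -/
theorem exists_mem_cylinders (z : ℕ → ℕ → ℕ) (l : ℕ → ℕ) (hl : StrictMono l)
    (hz : ∀ j k, j ≤ k → z k ∈ PiNat.cylinder (z j) (l j)) :
    ∃ y, ∀ k, y ∈ PiNat.cylinder (z k) (l k) := by
  refine ⟨fun i => z (i + 1) i, fun k i hi => ?_⟩
  rcases le_total (i + 1) k with h | h
  · exact (hz _ _ h i (lt_of_lt_of_le (Nat.lt_succ_self i) (hl.id_le (i + 1)))).symm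
  · exact hz _ _ h i hi

/-- If below every point of `E` the sets `g y` cover a critical set for the first `k`
families, then all `k + 1` families are critical. -/
theorem critOn_of_kernel {N : Type*} {k : ℕ} {Γ : Fin (k + 1) → Set (Set N)}
    (hΓ : HerFam (Γ (Fin.last k))) {g : (ℕ → ℕ) → Set N} (hg : ∀ a, IsOpen {z | a ∈ g z})
    (hgΓ : ∀ z, g z ∈ Γ (Fin.last k)) {A : Set N} {E : Set (ℕ → ℕ)}
    (hEA : ∀ z ∈ E, g z ⊆ A) (hne : E.Nonempty)
    (hE : ∀ z ∈ E, ∀ V, IsOpen V → z ∈ V → ∀ F : Set N, F.Finite →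
      CritOn (fun i => Γ (Fin.castSucc i)) {a | a ∉ F ∧ ∃ y ∈ V ∩ E, a ∈ g y}) :
    CritOn Γ A := by
  classical
  obtain ⟨z₀, hz₀⟩ := hne
  have hψ (b : E × ℕ × Finset N) := hE b.1 b.1.2 (PiNat.cylinder b.1.1 b.2.1)
    (PiNat.isOpen_cylinder _ _ _) (PiNat.self_mem_cylinder _ _) b.2.2 b.2.2.finite_toSet
  choose ψ hψmem hψchain using hψ
  have hnext (b : E × ℕ × Finset N) (w : List (Fin k)) : ∃ c : E × ℕ × Finset N,
      c.1.1 ∈ PiNat.cylinder b.1.1 b.2.1 ∧ b.2.1 < c.2.1 ∧ b.2.2 ⊆ c.2.2 ∧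
      (∀ y ∈ PiNat.cylinder c.1.1 c.2.1, ψ b w ∈ g y) ∧ ψ b w ∈ c.2.2 := by
    obtain ⟨-, y, ⟨hyb, hyE⟩, hy⟩ := hψmem b w
    obtain ⟨m, hm⟩ := exists_cylinder_subset (hg (ψ b w)) hy
    refine ⟨(⟨y, hyE⟩, max m (b.2.1 + 1), insert (ψ b w) b.2.2), hyb, by simp,
      Finset.subset_insert _ _, fun y' hy' => ?_, Finset.mem_insert_self _ _⟩
    exact hm (PiNat.cylinder_anti _ (le_max_left _ _) hy')
  choose next hnext using hnext
  let Below (b c : E × ℕ × Finset N) : Prop :=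
    c.1.1 ∈ PiNat.cylinder b.1.1 b.2.1 ∧ b.2.1 ≤ c.2.1 ∧ b.2.2 ⊆ c.2.2
  have below_refl (b) : Below b b := ⟨PiNat.self_mem_cylinder _ _, le_rfl, subset_rfl⟩
  have below_trans {b c d} (h : Below b c) (h' : Below c d) : Below b d :=
    ⟨fun i hi => (h'.1 i (hi.trans_le h.2.1)).trans (h.1 i hi), h.2.1.trans h'.2.1,
      h.2.2.trans h'.2.2⟩
  have below_next (b w) : Below b (next b w) :=
    ⟨(hnext b w).1, (hnext b w).2.1.le, (hnext b w).2.2.1⟩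
  let step (s : (E × ℕ × Finset N) × List (Fin k)) (i : Fin (k + 1)) :
      (E × ℕ × Finset N) × List (Fin k) :=
    Fin.lastCases (motive := fun _ => (E × ℕ × Finset N) × List (Fin k))
      (next s.1 s.2, []) (fun j => (s.1, s.2 ++ [j])) i
  have step_last (s) : step s (Fin.last k) = (next s.1 s.2, []) := by simp [step]
  have step_castSucc (s) (j : Fin k) : step s j.castSucc = (s.1, s.2 ++ [j]) := by simp [step]
  have below_foldl (w : List (Fin (k + 1))) : ∀ s, Below s.1 (w.foldl step s).1 := by
    induction w with
    | nil => exact fun s => below_refl _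
    | cons i w ih =>
      intro s
      refine below_trans ?_ (ih (step s i))
      induction i using Fin.lastCases with
      | last => rw [step_last]; exact below_next _ _
      | cast j => rw [step_castSucc]; exact below_refl _
  have foldl_castSucc (v : List (Fin k)) :
      ∀ s, (v.map Fin.castSucc).foldl step s = (s.1, s.2 ++ v) := by
    induction v with
    | nil => simp
    | cons j v ih => intro s; simp [ih, step_castSucc]
  let state (u : List (Fin (k + 1))) := u.foldl step ((⟨z₀, hz₀⟩, 0, ∅), [])
  refine ⟨fun u => ψ (state u).1 (state u).2, fun u => ?_, fun i X hX => ?_⟩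
  · obtain ⟨-, y, ⟨-, hyE⟩, hy⟩ := hψmem (state u).1 (state u).2
    exact hEA y hyE hy
  obtain ⟨x, rfl, hx⟩ := hX
  induction i using Fin.lastCases with
  | last =>
    let b (m : ℕ) := next (state (x m)).1 (state (x m)).2
    have hb (m : ℕ) : Below (b m) (state (x (m + 1))).1 := by
      obtain ⟨w, -, hw⟩ := hx m
      have : state (x (m + 1)) = w.foldl step (b m, []) := by
        simp only [state, hw, List.foldl_append, List.foldl_cons, step_last, b]
      rw [this]
      exact below_foldl w (b m, [])
    have hmono {j m : ℕ} (h : j ≤ m) : Below (b j) (b m) := by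
      induction m, h using Nat.le_induction with
      | base => exact below_refl _
      | succ m _ ih => exact below_trans ih (below_trans (hb m) (below_next _ _))
    obtain ⟨y, hy⟩ := exists_mem_cylinders (fun m => (b m).1.1) (fun m => (b m).2.1)
      (strictMono_nat_of_lt_succ fun m => (hb m).2.1.trans_lt (hnext _ _).2.1)
      (fun j m h => (hmono h).1)
    have hinj : Function.Injective fun m => ψ (state (x m)).1 (state (x m)).2 := by
      refine Function.Injective.of_lt_imp_ne fun j m hjm heq => ?_
      obtain ⟨m, rfl⟩ := Nat.exists_eq_succ_of_ne_zero (Nat.ne_of_gt (Nat.zero_lt_of_lt hjm))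
      refine (hψmem (state (x (m + 1))).1 (state (x (m + 1))).2).1 ?_
      have hj : ψ (state (x j)).1 (state (x j)).2 ∈ (b j).2.2 := (hnext _ _).2.2.2.2
      have := (below_trans (hmono (Nat.lt_succ_iff.1 hjm)) (hb m)).2.2 hj
      rwa [heq] at this
    rw [← Set.range_comp]
    have hinf := Set.infinite_range_of_injective hinj
    refine ⟨hΓ (g y) (hgΓ y) _ ?_ hinf, hinf⟩
    rintro _ ⟨m, rfl⟩
    exact (hnext _ _).2.2.2.1 y (hy m)
  | cast i =>
    have hs (m : ℕ) : (state (x (m + 1))).1 = (state (x m)).1 ∧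
        ∃ v : List (Fin k), (∀ j ∈ v, j ≤ i) ∧
          (state (x (m + 1))).2 = (state (x m)).2 ++ i :: v := by
      obtain ⟨w, hwi, hw⟩ := hx m
      obtain ⟨v, rfl, hv⟩ := exists_map_castSucc i w hwi
      have : state (x (m + 1)) = ((state (x m)).1, (state (x m)).2 ++ i :: v) := by
        simp only [state, hw, List.foldl_append, List.foldl_cons, step_castSucc, foldl_castSucc,
          List.append_assoc, List.singleton_append]
      exact ⟨by rw [this], v, hv, by rw [this]⟩
    have hconst (m : ℕ) : (state (x m)).1 = (state (x 0)).1 := by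
      induction m with
      | zero => rfl
      | succ m ih => exact (hs m).1.trans ih
    have key := hψchain (state (x 0)).1 i (Set.range fun m => (state (x m)).2)
      ⟨_, rfl, fun m => (hs m).2⟩
    rw [← Set.range_comp] at key ⊢
    have heq : ((fun u => ψ (state u).1 (state u).2) ∘ x) =
        (ψ (state (x 0)).1 ∘ fun m => (state (x m)).2) := by
      funext m
      simp only [Function.comp_apply, hconst m]
    rw [heq]
    exact key

theorem CountablyCovered.mono {N Z : Type*} {k : ℕ} {Γ : Fin k → Set (Set N)} {g : Z → Set N}
    {U V : Set Z} (h : CountablyCovered Γ g V) (hUV : U ⊆ V) : CountablyCovered Γ g U := by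
  obtain ⟨C, hC, hΓ, hg⟩ := h
  exact ⟨C, hC, hΓ, fun z hz => hg z (hUV hz)⟩

theorem CountablyCovered.sUnion {N Z : Type*} {k : ℕ} {Γ : Fin k → Set (Set N)}
    {g : Z → Set N} {T : Set (Set Z)} (hT : T.Countable)
    (h : ∀ U ∈ T, CountablyCovered Γ g U) : CountablyCovered Γ g (⋃₀ T) := by
  choose! C hC hΓ hg using h
  refine ⟨⋃ U ∈ T, C U, hT.biUnion hC, fun c hc => ?_, fun z hz => ?_⟩
  · obtain ⟨U, hU, hc⟩ := Set.mem_iUnion₂.1 hc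
    exact hΓ U hU c hc
  · obtain ⟨U, hU, hz⟩ := hz
    obtain ⟨c, hc, hfin⟩ := hg U hU z hz
    exact ⟨c, Set.mem_iUnion₂.2 ⟨U, hU, hc⟩, hfin⟩

theorem countablyCovered_of_not_critOn {N : Type*} {k : ℕ} {Γ : Fin (k + 1) → Set (Set N)}
    (hΓ : HerFam (Γ (Fin.last k))) {g : (ℕ → ℕ) → Set N} (hg : ∀ a, IsOpen {z | a ∈ g z})
    (hgΓ : ∀ z, g z ∈ Γ (Fin.last k)) {A : Set N} (hA : ¬ CritOn Γ A) :
    CountablyCovered (fun i => Γ (Fin.castSucc i)) g {z | g z ⊆ A} := by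
  set D := {z | g z ⊆ A}
  by_contra hD
  let T : Set (Set (ℕ → ℕ)) :=
    {V | IsOpen V ∧ CountablyCovered (fun i => Γ (Fin.castSucc i)) g (V ∩ D)}
  obtain ⟨T', hT'c, hT'T, hT'⟩ := TopologicalSpace.isOpen_sUnion_countable T fun V hV => hV.1
  have hO : CountablyCovered (fun i => Γ (Fin.castSucc i)) g (⋃₀ T ∩ D) := by
    refine (CountablyCovered.sUnion (hT'c.image (· ∩ D)) ?_).mono ?_
    · rintro _ ⟨V, hV, rfl⟩
      exact (hT'T hV).2
    · rw [← hT']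
      rintro z ⟨⟨V, hV, hz⟩, hzD⟩
      exact ⟨V ∩ D, ⟨V, hV, rfl⟩, hz, hzD⟩
  refine hA (critOn_of_kernel hΓ hg hgΓ (E := D \ ⋃₀ T) (fun z hz => hz.1) ?_ ?_)
  · by_contra hE
    refine hD (hO.mono fun z hz => ⟨?_, hz⟩)
    by_contra hzT
    exact hE ⟨z, hz, hzT⟩
  · intro z hz V hV hzV F hF
    by_contra hcrit
    refine hz.2 ⟨V, ⟨hV, ?_⟩, hzV⟩
    have hVE : CountablyCovered (fun i => Γ (Fin.castSucc i)) g (V ∩ (D \ ⋃₀ T)) := by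
      refine ⟨{{a | a ∉ F ∧ ∃ y ∈ V ∩ (D \ ⋃₀ T), a ∈ g y}}, Set.countable_singleton _,
        fun c hc => ?_, fun y hy => ⟨_, rfl, ?_⟩⟩
      · rw [Set.mem_singleton_iff.1 hc]
        exact hcrit
      · refine hF.subset fun a ha => ?_
        by_contra haF
        exact ha.2 ⟨haF, y, hy, ha.1⟩
    refine (CountablyCovered.sUnion (T := {V ∩ (D \ ⋃₀ T), ⋃₀ T ∩ D})
      (Set.to_countable _) ?_).mono ?_
    · rintro U (rfl | rfl)
      · exact hVE
      · exact hO
    · rintro y ⟨hyV, hyD⟩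
      by_cases hy : y ∈ ⋃₀ T
      · exact ⟨_, Or.inr rfl, hy, hyD⟩
      · exact ⟨_, Or.inl rfl, hyV, hyD, hy⟩

theorem exists_countable_cover_of_not_critOn {N : Type*} {k : ℕ}
    {Γ : Fin (k + 1) → Set (Set N)} (hher : HerFam (Γ (Fin.last k)))
    (hana : AnalyticFam (Γ (Fin.last k))) {A : Set N} (hA : ¬ CritOn Γ A) :
    ∃ C : Set (Set N), C.Countable ∧ (∀ c ∈ C, ¬ CritOn (fun i => Γ (Fin.castSucc i)) c) ∧
      ∀ x ∈ Γ (Fin.last k), x ⊆ A → ∃ c ∈ C, (x \ c).Finite := by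
  classical
  have hmem (x : Set N) : x ∈ Γ (Fin.last k) ↔
      (fun a => decide (a ∈ x)) ∈ {f : N → Bool | {a | f a = true} ∈ Γ (Fin.last k)} := by
    simp
  unfold AnalyticFam at hana
  rw [MeasureTheory.AnalyticSet] at hana
  rcases hana with hempty | ⟨f, hf, hrange⟩
  · refine ⟨∅, Set.countable_empty, by simp, fun x hx => ?_⟩
    rw [hmem, hempty] at hx
    exact hx.elim
  · have hopen (a : N) : IsOpen {z | a ∈ {p | f z p = true}} :=
      (isOpen_discrete {true}).preimage ((continuous_apply a).comp hf)
    have hfΓ (z) : {p | f z p = true} ∈ Γ (Fin.last k) := by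
      have : f z ∈ Set.range f := ⟨z, rfl⟩
      rwa [hrange] at this
    obtain ⟨C, hC, hcrit, hcov⟩ := countablyCovered_of_not_critOn hher hopen hfΓ hA
    refine ⟨C, hC, hcrit, fun x hx hxA => ?_⟩
    rw [hmem, ← hrange] at hx
    obtain ⟨z, hz⟩ := hx
    have hzx : {p | f z p = true} = x := by simp [hz]
    obtain ⟨c, hc, hfin⟩ := hcov z (hzx.trans_subset hxA)
    exact ⟨c, hc, hzx ▸ hfin⟩

/-- Families are separated if each of them is countably covered by sets on which the
other ones are separated. -/
theorem sepOn_of_cover {N ι : Type*} [DecidableEq ι] {Γ : ι → Set (Set N)}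
    (hher : ∀ i, HerFam (Γ i)) {S : Finset ι} (hS : S.Nonempty) {A : Set N}
    (h : ∀ j ∈ S, ∃ C : Set (Set N), C.Countable ∧ (∀ c ∈ C, SepOn Γ (S.erase j) c) ∧
      ∀ x ∈ Γ j, x ⊆ A → ∃ c ∈ C, (x \ c).Finite) :
    SepOn Γ S A := by
  classical
  have henum : ∀ j ∈ S, ∃ c : ℕ → Set N, (∀ m, SepOn Γ (S.erase j) (c m)) ∧
      ∀ x ∈ Γ j, x ⊆ A → ∃ m, (x \ c m).Finite := by
    intro j hj
    obtain ⟨C, hC, hsep, hcov⟩ := h j hj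
    have hempty : SepOn Γ (S.erase j) ∅ :=
      ⟨fun _ => ∅, fun i _ x _ hx => by simp [Set.subset_empty_iff.1 hx], by simp⟩
    obtain ⟨c, hc⟩ := (hC.insert ∅).exists_eq_range (Set.insert_nonempty _ _)
    refine ⟨c, fun m => ?_, fun x hx hxA => ?_⟩
    · have hm : c m ∈ insert ∅ C := hc ▸ Set.mem_range_self m
      rcases hm with hm | hm
      · rw [hm]
        exact hempty
      · exact hsep _ hm
    · obtain ⟨d, hd, hfin⟩ := hcov x hx hxA
      obtain ⟨m, rfl⟩ : d ∈ Set.range c := hc ▸ Set.mem_insert_of_mem _ hd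
      exact ⟨m, hfin⟩
  choose! c hsep hcov using henum
  choose! a ha hinter using hsep
  have hfirst (p : N) (hp : ∃ m, ∃ j ∈ S, p ∈ c j m) : ∃ m j, j ∈ S ∧ p ∈ c j m ∧
      ∀ m', (∃ j ∈ S, p ∈ c j m') → m ≤ m' := by
    obtain ⟨j, hj, hpj⟩ := Nat.find_spec hp
    exact ⟨Nat.find hp, j, hj, hpj, fun m' hm' => Nat.find_min' hp hm'⟩
  have : Nonempty ι := ⟨hS.choose⟩
  choose! r t htS htc hrmin using hfirst
  refine ⟨fun i => {p | (∃ m, ∃ j ∈ S, p ∈ c j m) ∧ (i ≠ t p → p ∈ a (t p) (r p) i)}, ?_, ?_⟩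
  · intro i hi x hx hxA
    obtain ⟨m, hm⟩ := hcov i hi x hx hxA
    refine (hm.union ((Set.finite_Iic m).biUnion fun m' _ =>
      ((S.erase i).finite_toSet.biUnion (t := fun j => (x ∩ c j m') \ a j m' i)
        fun j hj => ?_))).subset ?_
    · have hj := Finset.mem_erase.1 hj
      by_cases hfin : (x ∩ c j m').Finite
      · exact hfin.subset Set.sdiff_subset
      · exact ha j hj.2 m' i (Finset.mem_erase.2 ⟨hj.1.symm, hi⟩) _
          (hher i x hx _ Set.inter_subset_left hfin) Set.inter_subset_right
    · rintro p ⟨hpx, hpa⟩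
      by_cases hpc : p ∈ c i m
      · have hex : ∃ m, ∃ j ∈ S, p ∈ c j m := ⟨m, i, hi, hpc⟩
        have hpa : i ≠ t p ∧ p ∉ a (t p) (r p) i := by
          by_contra hcon
          exact hpa ⟨hex, fun hne => by_contra fun hp => hcon ⟨hne, hp⟩⟩
        refine Or.inr (Set.mem_iUnion₂.2 ⟨r p, hrmin p hex m ⟨i, hi, hpc⟩,
          Set.mem_iUnion₂.2 ⟨t p, ?_, ⟨hpx, htc p hex⟩, hpa.2⟩⟩)
        exact Finset.mem_coe.2 (Finset.mem_erase.2 ⟨hpa.1.symm, htS p hex⟩)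
      · exact Or.inl ⟨hpx, hpc⟩
  · intro p _
    by_cases hex : ∃ m, ∃ j ∈ S, p ∈ c j m
    · obtain ⟨i, hi, hpi⟩ := hinter (t p) (htS p hex) (r p) p (htc p hex)
      have hi := Finset.mem_erase.1 hi
      exact ⟨i, hi.2, fun hp => hpi (hp.2 hi.1)⟩
    · obtain ⟨i, hi⟩ := hS
      exact ⟨i, hi, fun hp => hex hp.1⟩

theorem sepOn_of_forall_not_critOn {N ι : Type*} [Finite ι] [DecidableEq ι]
    {Γ : ι → Set (Set N)} (hher : ∀ i, HerFam (Γ i)) (hana : ∀ i, AnalyticFam (Γ i)) (k : ℕ) :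
    ∀ (S : Finset ι) (A : Set N), S.card = k →
      (∀ σ : Fin k → ι, Function.Injective σ → (∀ i, σ i ∈ S) → ¬ CritOn (Γ ∘ σ) A) →
      SepOn Γ S A := by
  induction k with
  | zero =>
    intro S A hS h
    refine ⟨fun _ => ∅, by simp [Finset.card_eq_zero.1 hS], fun p hp => ?_⟩
    exact (h Fin.elim0 (fun i => i.elim0) (fun i => i.elim0)
      ⟨fun _ => p, fun _ => hp, fun i => i.elim0⟩).elim
  | succ k ih =>
    intro S A hS h
    refine sepOn_of_cover hher (Finset.card_pos.1 (by omega)) fun j hj => ?_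
    let P := {τ : Fin k → ι // Function.Injective τ ∧ ∀ i, τ i ∈ S.erase j}
    have hcover (τ : P) := by
      have hτ : ¬ CritOn (Γ ∘ (Fin.snoc τ.1 j : Fin (k + 1) → ι)) A := by
        refine h _ (Fin.snoc_injective_iff.2 ⟨τ.2.1, ?_⟩) fun i => ?_
        · rintro ⟨i, hi⟩
          exact (Finset.mem_erase.1 (τ.2.2 i)).1 hi
        · induction i using Fin.lastCases with
          | last => simpa using hj
          | cast i => simpa using (Finset.mem_erase.1 (τ.2.2 i)).2
      exact exists_countable_cover_of_not_critOn (hher _) (hana _) hτ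
    simp only [Function.comp_apply, Fin.snoc_last, Fin.snoc_castSucc] at hcover
    choose C hC hcrit hcov using hcover
    refine ⟨(fun d : P → Set N => ⋂ τ, d τ) '' Set.univ.pi C,
      (Set.countable_univ_pi hC).image _, ?_, fun x hx hxA => ?_⟩
    · rintro _ ⟨d, hd, rfl⟩
      refine ih _ _ (by rw [Finset.card_erase_of_mem hj, hS]; rfl) fun τ hτ hτS hc => ?_
      exact hcrit ⟨τ, hτ, hτS⟩ _ (hd ⟨τ, hτ, hτS⟩ trivial)
        (hc.mono (Set.iInter_subset _ _))
    · choose d hd hfin using fun τ => hcov τ x hx hxA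
      refine ⟨_, ⟨d, fun τ _ => hd τ, rfl⟩, ?_⟩
      rw [Set.sdiff_iInter]
      exact Set.finite_iUnion hfin

/-- The sequence starting at `a` whose next term is computed by `v` from the earlier ones. -/
noncomputable def histRec {α : Type*} (v : ℕ → (ℕ → α) → α) (a : α) : ℕ → α
  | 0 => a
  | m + 1 => v m fun j => if _ : j ≤ m then histRec v a j else a
decreasing_by omega

/-- Bijective base-`k` numeration of words. -/
def wordCode {k : ℕ} (u : List (Fin k)) : ℕ :=
  u.foldl (fun c i => k * c + i + 1) 0

theorem wordCode_append_singleton {k : ℕ} (u : List (Fin k)) (i : Fin k) :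
    wordCode (u ++ [i]) = k * wordCode u + i + 1 := by
  simp [wordCode]

theorem wordCode_injective {k : ℕ} : Function.Injective (wordCode (k := k)) := by
  intro u
  induction u using List.reverseRecOn with
  | nil =>
    intro v h
    rcases List.eq_nil_or_concat v with rfl | ⟨v, i, rfl⟩
    · rfl
    · rw [List.concat_eq_append, wordCode_append_singleton] at h
      simp [wordCode] at h
  | append_singleton u i ih =>
    intro v h
    rcases List.eq_nil_or_concat v with rfl | ⟨v, j, rfl⟩
    · rw [wordCode_append_singleton] at h
      simp [wordCode] at h
    · rw [List.concat_eq_append] at h ⊢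
      rw [wordCode_append_singleton, wordCode_append_singleton] at h
      have h : k * wordCode u + i = k * wordCode v + j := by omega
      have hk : 0 < k := i.pos
      have hdiv := congrArg (· / k) h
      have hmod := congrArg (· % k) h
      simp only [Nat.mul_add_div hk, Nat.div_eq_of_lt i.2, Nat.div_eq_of_lt j.2, add_zero,
        Nat.mul_add_mod, Nat.mod_eq_of_lt i.2, Nat.mod_eq_of_lt j.2] at hdiv hmod
      rw [ih hdiv, Fin.ext hmod]

/-- If `φ` takes infinitely many values along each sequence `u⌢i⌢⋯⌢i`, the tree can be
stretched so that `φ` becomes injective. -/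
theorem exists_stretch_injective {N : Type*} {k : ℕ} (φ : List (Fin k) → N)
    (hφ : ∀ u i, (Set.range fun m => φ (u ++ List.replicate (m + 1) i)).Infinite) :
    ∃ e : List (Fin k) → List (Fin k), Function.Injective (φ ∘ e) ∧
      ∀ u i, ∃ m, e (u ++ [i]) = e u ++ List.replicate (m + 1) i := by
  rcases Nat.eq_zero_or_pos k with rfl | hk
  · exact ⟨id, fun u v _ => Subsingleton.elim u v, fun u i => i.elim0⟩
  have hstep (m : ℕ) (h : ℕ → List (Fin k)) : ∃ v : List (Fin k),
      (∃ r, v = h (m / k) ++ List.replicate (r + 1) ⟨m % k, Nat.mod_lt m hk⟩) ∧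
      ∀ j ≤ m, φ v ≠ φ (h j) := by
    obtain ⟨_, ⟨r, rfl⟩, hr⟩ := (hφ (h (m / k)) ⟨m % k, Nat.mod_lt m hk⟩).exists_notMem_finite
      ((Set.finite_Iic m).image fun j => φ (h j))
    exact ⟨_, ⟨r, rfl⟩, fun j hj heq => hr ⟨j, hj, heq.symm⟩⟩
  choose v hv hne using hstep
  have hrec (m : ℕ) : histRec v [] (m + 1) =
      v m fun j => if _ : j ≤ m then histRec v [] j else [] := by
    rw [histRec]
  have hinj : Function.Injective fun m => φ (histRec v [] m) := by
    refine Function.Injective.of_lt_imp_ne fun j m hjm => ?_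
    obtain ⟨m, rfl⟩ := Nat.exists_eq_succ_of_ne_zero (Nat.ne_of_gt (Nat.zero_lt_of_lt hjm))
    have hj : j ≤ m := Nat.lt_succ_iff.1 hjm
    have := hne m (fun j => if _ : j ≤ m then histRec v [] j else []) j hj
    rw [← hrec, dif_pos hj] at this
    exact this.symm
  refine ⟨fun u => histRec v [] (wordCode u), hinj.comp wordCode_injective, fun u i => ?_⟩
  have hdiv : (k * wordCode u + i) / k = wordCode u := by
    rw [Nat.mul_add_div hk, Nat.div_eq_of_lt i.2, add_zero]
  have hmod : (k * wordCode u + i) % k = i := by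
    rw [Nat.mul_add_mod, Nat.mod_eq_of_lt i.2]
  obtain ⟨r, hr⟩ := hv (k * wordCode u + i)
    (fun j => if _ : j ≤ k * wordCode u + i then histRec v [] j else [])
  refine ⟨r, ?_⟩
  rw [← hrec, dif_pos (Nat.div_le_self _ _)] at hr
  simpa only [wordCode_append_singleton, hdiv, hmod] using hr

/-- A critical map can be thinned out to an injective one. -/
theorem CritOn.exists_injective {N : Type*} {k : ℕ} {Γ : Fin k → Set (Set N)} {A : Set N}
    (h : CritOn Γ A) : ∃ φ : List (Fin k) → N, Function.Injective φ ∧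
      ∀ i X, BChain i X → φ '' X ∈ Γ i := by
  obtain ⟨φ, -, hφ⟩ := h
  obtain ⟨e, hinj, he⟩ := exists_stretch_injective φ fun u i => by
    have hX : BChain i (Set.range fun m => u ++ List.replicate (m + 1) i) :=
      ⟨_, rfl, fun m => ⟨[], by simp, by simp [List.replicate_succ' (n := m + 1)]⟩⟩
    have := (hφ i _ hX).2
    rwa [← Set.range_comp] at this
  have hchain (u : List (Fin k)) (i : Fin k) (w : List (Fin k)) (hw : ∀ j ∈ w, j ≤ i) :
      ∃ w' : List (Fin k), (∀ j ∈ w', j ≤ i) ∧ e (u ++ i :: w) = e u ++ i :: w' := by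
    induction w using List.reverseRecOn with
    | nil =>
      obtain ⟨m, hm⟩ := he u i
      exact ⟨List.replicate m i, fun j hj => (List.eq_of_mem_replicate hj).le, hm⟩
    | append_singleton w a ih =>
      obtain ⟨w', hw', heq⟩ := ih fun j hj => hw j (List.mem_append_left _ hj)
      obtain ⟨m, hm⟩ := he (u ++ i :: w) a
      refine ⟨w' ++ List.replicate (m + 1) a, fun j hj => ?_, ?_⟩
      · rcases List.mem_append.1 hj with hj | hj
        · exact hw' j hj
        · rw [List.eq_of_mem_replicate hj]
          exact hw a (by simp)
      · rw [← List.cons_append, ← List.append_assoc, hm, heq, List.append_assoc,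
          List.cons_append]
  refine ⟨φ ∘ e, hinj, fun i X hX => ?_⟩
  obtain ⟨x, rfl, hx⟩ := hX
  rw [Set.image_comp, ← Set.range_comp e x]
  refine (hφ i _ ⟨e ∘ x, rfl, fun m => ?_⟩).1
  obtain ⟨w, hw, hxw⟩ := hx m
  obtain ⟨w', hw', heq⟩ := hchain (x m) i w hw
  exact ⟨w', hw', by rw [Function.comp_apply, Function.comp_apply, hxw, heq]⟩

/-- every analytic n∗-gap contains a copy of the critical n-gap, up to a
permutation: there are an injection φ of the n-adic tree into N and a permutation ε of
{0,…,n−1} sending every [i]-chain into Γ_{ε(i)}. -/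
theorem statement_6 (n : ℕ) (N : Type) [Countable N] [Infinite N] (Γ : Fin n → Set (Set N))
    (hgap : NStarGap Γ) (hana : ∀ i, AnalyticFam (Γ i)) :
    ∃ (φ : List (Fin n) → N) (ε : Equiv.Perm (Fin n)), Function.Injective φ ∧
      ∀ i : Fin n, ∀ X : Set (List (Fin n)), BChain i X → φ '' X ∈ Γ (ε i) := by
  classical
  obtain ⟨-, hsep, hher⟩ := hgap
  by_contra hcon
  refine hsep ?_
  obtain ⟨a, ha, hinter⟩ := sepOn_of_forall_not_critOn hher hana n Finset.univ Set.univ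
    (by simp) fun σ hσ _ hcrit => by
      obtain ⟨φ, hφ, hchain⟩ := hcrit.exists_injective
      exact hcon ⟨φ, Equiv.ofBijective σ (Finite.injective_iff_bijective.1 hσ), hφ, hchain⟩
  refine ⟨a, fun i x hx => ha i (Finset.mem_univ i) x hx (Set.subset_univ x), ?_⟩
  convert Set.finite_empty
  refine Set.eq_empty_of_forall_notMem fun p hp => ?_
  obtain ⟨i, -, hi⟩ := hinter p trivial
  exact hi (Set.mem_iInter.1 hp i)
end

section
/- Let Γ = {Γ₀, Γ₁} be a 2-gap on a countable set N such that Γ₁ is analytic and Γ₁ is not countably generated in Γ₀^⊥. Then there exists an injective function u : 2^{<ω} → N such that for each i ∈ {0,1} and every [i]-chain X ⊆ 2^{<ω}, the image u(X) = {u(s) : s ∈ X} belongs to Γ_i. -/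
open Set

/-- A family `I` is countably generated in a family `J` if some countable `D ⊆ J`
has the property that every member of `I` is contained in some member of `D`. -/
def CtblGenIn {N : Type*} (I J : Set (Set N)) : Prop :=
  ∃ D ⊆ J, D.Countable ∧ ∀ x ∈ I, ∃ y ∈ D, x ⊆ y


/-- A greedily chosen injective system of representatives of a sequence of infinite sets. -/
noncomputable def infiniteTransversal {N : Type*} (C : ℕ → Set N) (hC : ∀ n, (C n).Infinite) :
    ℕ → N
  | n => ((hC n).sdiff (Set.finite_range
      (fun i : Fin n => infiniteTransversal C hC i.1))).nonempty.some
  decreasing_by exact i.2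

lemma infiniteTransversal_mem_diff {N : Type*} (C : ℕ → Set N) (hC : ∀ n, (C n).Infinite)
    (n : ℕ) : infiniteTransversal C hC n ∈
      C n \ Set.range (fun i : Fin n => infiniteTransversal C hC i.1) := by
  have h := ((hC n).sdiff (Set.finite_range
      (fun i : Fin n => infiniteTransversal C hC i.1))).nonempty.some_mem
  rw [infiniteTransversal]
  exact h

lemma exists_injective_mem_of_infinite {J N : Type*} [Countable J] (C : J → Set N)
    (hC : ∀ j, (C j).Infinite) : ∃ g : J → N, Function.Injective g ∧ ∀ j, g j ∈ C j := by
  cases isEmpty_or_nonempty J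
  · exact ⟨isEmptyElim, fun a => isEmptyElim a, fun a => isEmptyElim a⟩
  obtain ⟨φ, hφ⟩ := exists_surjective_nat J
  set h := infiniteTransversal (C ∘ φ) (fun n => hC (φ n))
  have hmem := infiniteTransversal_mem_diff (C ∘ φ) (fun n => hC (φ n))
  have hinj : Function.Injective h := by
    intro m n he
    rcases lt_trichotomy m n with hmn | hmn | hmn
    · exact ((hmem n).2 ⟨⟨m, hmn⟩, he⟩).elim
    · exact hmn
    · exact ((hmem m).2 ⟨⟨n, hmn⟩, he.symm⟩).elim
  refine ⟨h ∘ Function.surjInv hφ, hinj.comp (Function.injective_surjInv hφ), fun j => ?_⟩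
  have := (hmem (Function.surjInv hφ j)).1
  rwa [Function.comp_apply, Function.surjInv_eq hφ] at this

/-- The basic open set of the Baire space attached to a finite (reversed) sequence. -/
def baireCylinder (l : List ℕ) : Set (ℕ → ℕ) := {x | PiNat.res x l.length = l}

lemma mem_baireCylinder_res (x : ℕ → ℕ) (n : ℕ) {y : ℕ → ℕ} :
    y ∈ baireCylinder (PiNat.res x n) ↔ ∀ i < n, y i = x i := by
  simp [baireCylinder, PiNat.res_eq_res]

lemma mem_baireCylinder_congr {l : List ℕ} {x y : ℕ → ℕ} (hx : x ∈ baireCylinder l) :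
    y ∈ baireCylinder l ↔ ∀ i < l.length, y i = x i := by
  conv_lhs => rw [← show PiNat.res x l.length = l from hx]
  exact mem_baireCylinder_res x _

/-- Nested cylinders of unbounded length have a common point. -/
lemma exists_mem_baireCylinder_of_nested (l : ℕ → List ℕ)
    (hne : ∀ k, (baireCylinder (l k)).Nonempty)
    (hsub : ∀ k, baireCylinder (l (k + 1)) ⊆ baireCylinder (l k))
    (hlen : ∀ k, (l k).length < (l (k + 1)).length) :
    ∃ y, ∀ k, y ∈ baireCylinder (l k) := by
  choose z hz using hne
  have hanti : Antitone fun k => baireCylinder (l k) := antitone_nat_of_succ_le hsub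
  have hmono : StrictMono fun k => (l k).length := strictMono_nat_of_lt_succ hlen
  refine ⟨fun n => z (n + 1) n, fun k => (mem_baireCylinder_congr (hz k)).2 fun i hi => ?_⟩
  rcases le_total k (i + 1) with hk | hk
  · exact (mem_baireCylinder_congr (hz k)).1 (hanti hk (hz (i + 1))) i hi
  · exact ((mem_baireCylinder_congr (hz (i + 1))).1 (hanti hk (hz k)) i
      (lt_of_lt_of_le (Nat.lt_succ_self i) (hmono.le_apply (x := i + 1)))).symm

lemma CtblGenIn.mono {N : Type*} {I I' J : Set (Set N)} (h : CtblGenIn I J) (hI : I' ⊆ I) :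
    CtblGenIn I' J := by
  obtain ⟨D, hDJ, hDc, hD⟩ := h
  exact ⟨D, hDJ, hDc, fun x hx => hD x (hI hx)⟩

lemma CtblGenIn.iUnion {N ι : Type*} [Countable ι] {I : ι → Set (Set N)} {J : Set (Set N)}
    (h : ∀ i, CtblGenIn (I i) J) : CtblGenIn (⋃ i, I i) J := by
  choose D hDJ hDc hD using h
  refine ⟨⋃ i, D i, iUnion_subset hDJ, countable_iUnion hDc, fun x hx => ?_⟩
  obtain ⟨i, hi⟩ := mem_iUnion.1 hx
  obtain ⟨y, hy, hxy⟩ := hD i x hi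
  exact ⟨y, mem_iUnion.2 ⟨i, hy⟩, hxy⟩

lemma CtblGenIn.union_of_sUnion_mem {N : Type*} {I I' J : Set (Set N)} (h : CtblGenIn I J)
    (hI' : ⋃₀ I' ∈ J) : CtblGenIn (I ∪ I') J := by
  obtain ⟨D, hDJ, hDc, hD⟩ := h
  refine ⟨insert (⋃₀ I') D, insert_subset hI' hDJ, hDc.insert _, ?_⟩
  rintro x (hx | hx)
  · obtain ⟨y, hy, hxy⟩ := hD x hx
    exact ⟨y, mem_insert_of_mem _ hy, hxy⟩
  · exact ⟨_, mem_insert _ _, subset_sUnion_of_mem hx⟩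

/-- The points of the Baire space all of whose neighbourhoods have an image under `f` which is
not countably generated in `J`. -/
def ctblGenKernel {N : Type*} (f : (ℕ → ℕ) → Set N) (J : Set (Set N)) : Set (ℕ → ℕ) :=
  {x | ∀ n, ¬ CtblGenIn (f '' baireCylinder (PiNat.res x n)) J}

lemma sUnion_image_kernel_notMem {N : Type*} (f : (ℕ → ℕ) → Set N) (J : Set (Set N))
    {l : List ℕ} (hl : ¬ CtblGenIn (f '' baireCylinder l) J) :
    ⋃₀ (f '' (ctblGenKernel f J ∩ baireCylinder l)) ∉ J := by
  intro hJ
  have hbad : CtblGenIn (⋃ m : {m : List ℕ // CtblGenIn (f '' baireCylinder m) J},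
      f '' baireCylinder m.1) J := CtblGenIn.iUnion fun m => m.2
  refine hl ((hbad.union_of_sUnion_mem hJ).mono ?_)
  rintro _ ⟨x, hx, rfl⟩
  by_cases hxP : x ∈ ctblGenKernel f J
  · exact Or.inr ⟨x, ⟨hxP, hx⟩, rfl⟩
  · obtain ⟨n, hn⟩ : ∃ n, CtblGenIn (f '' baireCylinder (PiNat.res x n)) J := by
      simpa [ctblGenKernel] using hxP
    exact Or.inl (mem_iUnion.2
      ⟨⟨_, hn⟩, x, (mem_baireCylinder_res x n).2 fun _ _ => rfl, rfl⟩)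

/-- If membership of every point in `f x` is an open condition on `x`, a point of
`f x` for `x` in the kernel stays in `f y` for `y` in a strictly smaller good cylinder. -/
lemma exists_good_extension {N : Type*} {f : (ℕ → ℕ) → Set N} {J : Set (Set N)}
    (hf : ∀ m, IsOpen {x | m ∈ f x}) {l : List ℕ} {m : N}
    (hm : m ∈ ⋃₀ (f '' (ctblGenKernel f J ∩ baireCylinder l))) :
    ∃ l' : List ℕ, ¬ CtblGenIn (f '' baireCylinder l') J ∧
      baireCylinder l' ⊆ baireCylinder l ∧ l.length < l'.length ∧
      ∀ y ∈ baireCylinder l', m ∈ f y := by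
  obtain ⟨_, ⟨x, ⟨hxP, hxl⟩, rfl⟩, hmx⟩ := hm
  obtain ⟨n, hn⟩ : ∃ n, PiNat.cylinder x n ⊆ {x | m ∈ f x} := by
    obtain ⟨_, ⟨z, n, rfl⟩, hxz, hsub⟩ :=
      (PiNat.isTopologicalBasis_cylinders (fun _ : ℕ => ℕ)).exists_subset_of_mem_open
        (show x ∈ {x | m ∈ f x} from hmx) (hf m)
    exact ⟨n, by rwa [PiNat.mem_cylinder_iff_eq.1 hxz]⟩
  refine ⟨PiNat.res x (max n (l.length + 1)), hxP _, fun y hy => ?_, ?_, fun y hy => hn ?_⟩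
  · rw [mem_baireCylinder_res] at hy
    exact (mem_baireCylinder_congr hxl).2 fun i hi => hy i (by omega)
  · simp
  · rw [mem_baireCylinder_res] at hy
    exact fun i hi => hy i (by omega)

/-- The state reached after reading a (reversed) dyadic sequence, where reading `0` keeps the
state and reading `1` updates it. -/
def dyadicState {S : Type*} (root : S) (next : S → List (Fin 2) → S) : List (Fin 2) → S
  | [] => root
  | i :: s => if i = 0 then dyadicState root next s else next (dyadicState root next s) s

lemma BChain.image_infinite {N : Type*} {n : ℕ} {i : Fin n} {X : Set (List (Fin n))}
    (hX : BChain i X) {u : List (Fin n) → N} (hu : Function.Injective u) : (u '' X).Infinite := by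
  obtain ⟨x, rfl, hx⟩ := hX
  refine (infinite_range_of_injective ?_).image hu.injOn
  have : StrictMono fun k => (x k).length := strictMono_nat_of_lt_succ fun k => by
    obtain ⟨w, -, hw⟩ := hx k
    simp only [hw, List.length_append, List.length_cons]
    omega
  exact fun a b hab => this.injective (congrArg List.length hab)

/-- The dyadic tree construction for a family parametrized by an open relation on the Baire space. -/
lemma exists_dyadic_embedding {N : Type*} {Γ₀ Γ₁ : Set (Set N)} (hher₀ : HerFam Γ₀)
    (hher₁ : HerFam Γ₁) {f : (ℕ → ℕ) → Set N} (hf : ∀ m, IsOpen {x | m ∈ f x})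
    (hfΓ : ∀ x, f x ∈ Γ₁) (hncg : ¬ CtblGenIn (range f) (orthFamC Γ₀)) :
    ∃ u : List (Fin 2) → N, Function.Injective u ∧
      ∀ i : Fin 2, ∀ X : Set (List (Fin 2)), BChain i X → u '' X ∈ ![Γ₀, Γ₁] i := by
  let S := {l : List ℕ // ¬ CtblGenIn (f '' baireCylinder l) (orthFamC Γ₀)}
  have hC : ∀ l : S, ∃ c ∈ Γ₀, c.Infinite ∧
      c ⊆ ⋃₀ (f '' (ctblGenKernel f (orthFamC Γ₀) ∩ baireCylinder l.1)) := by
    intro l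
    have := sUnion_image_kernel_notMem f _ l.2
    simp only [orthFamC, mem_ofPred_eq, not_forall] at this
    obtain ⟨x, hx, hinf⟩ := this
    exact ⟨_, hher₀ x hx _ inter_subset_left hinf, hinf, inter_subset_right⟩
  choose c hcΓ hcinf hcsub using hC
  obtain ⟨g, hginj, hg⟩ := exists_injective_mem_of_infinite
    (fun p : S × List (Fin 2) => c p.1) (fun p => hcinf p.1)
  have hext : ∀ (l : S) (s : List (Fin 2)), ∃ l' : S,
      baireCylinder l'.1 ⊆ baireCylinder l.1 ∧ l.1.length < l'.1.length ∧
      ∀ y ∈ baireCylinder l'.1, g (l, s) ∈ f y := by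
    intro l s
    obtain ⟨l', h, h'⟩ := exists_good_extension hf (hcsub l (hg (l, s)))
    exact ⟨⟨l', h⟩, h'⟩
  choose next hnsub hnlen hnmem using hext
  have hroot : ¬ CtblGenIn (f '' baireCylinder []) (orthFamC Γ₀) := by
    have : baireCylinder [] = univ := by simp [baireCylinder]
    rwa [this, image_univ]
  let t := dyadicState (⟨[], hroot⟩ : S) next
  let u : List (Fin 2) → N := fun s => g (t s.reverse, s.reverse)
  have hu : Function.Injective u := fun a b hab =>
    List.reverse_injective (Prod.ext_iff.1 (hginj hab)).2
  have ht0 : ∀ s, t (0 :: s) = t s := fun s => by simp [t, dyadicState]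
  have ht1 : ∀ s, t (1 :: s) = next (t s) s := fun s => by simp [t, dyadicState]
  have hfin : ∀ i : Fin 2, i = 0 ∨ i = 1 := by decide
  refine ⟨u, hu, fun i X hX => ?_⟩
  have hinf := hX.image_infinite hu
  obtain ⟨x, rfl, hx⟩ := hX
  rcases hfin i with rfl | rfl
  · have hzero : ∀ (w s : List (Fin 2)), (∀ j ∈ w, j ≤ 0) → t (w ++ s) = t s := by
      intro w s hw
      induction w with
      | nil => rfl
      | cons a w ih =>
        obtain rfl : a = 0 := Fin.le_zero_iff.1 (hw a (by simp))
        rw [List.cons_append, ht0]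
        exact ih fun j hj => hw j (by simp [hj])
    have hconst : ∀ k, t (x k).reverse = t (x 0).reverse := by
      intro k
      induction k with
      | zero => rfl
      | succ k ih =>
        obtain ⟨w, hw, hxk⟩ := hx k
        rw [hxk, ← ih, List.reverse_append]
        refine hzero _ _ fun j hj => ?_
        rcases List.mem_cons.1 (List.mem_reverse.1 hj) with rfl | h
        exacts [le_rfl, hw j h]
    refine hher₀ _ (hcΓ (t (x 0).reverse)) _ ?_ hinf
    rintro _ ⟨_, ⟨k, rfl⟩, rfl⟩
    rw [← hconst k]
    exact hg (t (x k).reverse, (x k).reverse)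
  · have happ : ∀ w s : List (Fin 2), baireCylinder (t (w ++ s)).1 ⊆ baireCylinder (t s).1 ∧
        (t s).1.length ≤ (t (w ++ s)).1.length := by
      intro w s
      induction w with
      | nil => exact ⟨Subset.rfl, le_rfl⟩
      | cons a w ih =>
        rw [List.cons_append]
        rcases hfin a with rfl | rfl
        · rwa [ht0]
        · rw [ht1]
          exact ⟨(hnsub _ _).trans ih.1, ih.2.trans (hnlen _ _).le⟩
    have hstep : ∀ k, baireCylinder (t (x (k + 1)).reverse).1 ⊆
          baireCylinder (next (t (x k).reverse) (x k).reverse).1 ∧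
        (t (x k).reverse).1.length < (t (x (k + 1)).reverse).1.length := by
      intro k
      obtain ⟨w, -, hxk⟩ := hx k
      have hr : (x (k + 1)).reverse = w.reverse ++ 1 :: (x k).reverse := by simp [hxk]
      have := happ w.reverse (1 :: (x k).reverse)
      rw [ht1] at this
      rw [hr]
      exact ⟨this.1, (hnlen _ _).trans_le this.2⟩
    obtain ⟨y, hy⟩ := exists_mem_baireCylinder_of_nested (fun k => (t (x k).reverse).1)
      (fun k => by
        rw [nonempty_iff_ne_empty]
        intro he
        refine (t (x k).reverse).2 ?_
        rw [he, image_empty]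
        exact ⟨∅, empty_subset _, countable_empty, fun _ h => h.elim⟩)
      (fun k => (hstep k).1.trans (hnsub _ _)) (fun k => (hstep k).2)
    refine hher₁ _ (hfΓ y) _ ?_ hinf
    rintro _ ⟨_, ⟨k, rfl⟩, rfl⟩
    exact hnmem _ _ y ((hstep k).1 (hy (k + 1)))

/-- if {Γ₀, Γ₁} is a 2-gap on a countable set N with Γ₁ analytic and not
countably generated in Γ₀^⊥, then there is an injection u of the dyadic tree into N
sending [i]-chains into Γ_i, for i = 0, 1. -/
theorem statement_7 (N : Type) [Countable N] [Infinite N] (Γ₀ Γ₁ : Set (Set N))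
    (horth : OrthFam Γ₀ Γ₁) (hher₀ : HerFam Γ₀) (hher₁ : HerFam Γ₁)
    (hnsep : ¬ SepFam ![Γ₀, Γ₁]) (hana : AnalyticFam Γ₁)
    (hncg : ¬ CtblGenIn Γ₁ (orthFamC Γ₀)) :
    ∃ u : List (Fin 2) → N, Function.Injective u ∧
      ∀ i : Fin 2, ∀ X : Set (List (Fin 2)), BChain i X → u '' X ∈ ![Γ₀, Γ₁] i := by
  rw [AnalyticFam, MeasureTheory.AnalyticSet] at hana
  rcases hana with hempty | ⟨F, hF, hrange⟩
  · refine (hncg ⟨∅, empty_subset _, countable_empty, fun x hx => ?_⟩).elim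
    classical
    have : (fun n => decide (n ∈ x)) ∈ {f : N → Bool | {x | f x = true} ∈ Γ₁} := by
      simpa using hx
    rw [hempty] at this
    exact this.elim
  · have hrange' : range (fun x => {m | F x m = true}) = Γ₁ := by
      ext a
      constructor
      · rintro ⟨x, rfl⟩
        exact hrange.subset (mem_range_self x)
      · intro ha
        classical
        have : (fun n => decide (n ∈ a)) ∈ {f : N → Bool | {x | f x = true} ∈ Γ₁} := by
          simpa using ha
        obtain ⟨x, hx⟩ := hrange.superset this
        exact ⟨x, by simp [hx]⟩
    refine exists_dyadic_embedding hher₀ hher₁ (f := fun x => {m | F x m = true})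
      (fun m => ?_) (fun x => hrange'.subset (mem_range_self x)) (by rwa [hrange'])
    exact (isOpen_discrete {true}).preimage ((continuous_apply m).comp hF)
end

section
/- For every function φ : n^{<ω} → m^{<ω} there exists T ⊆ n^{<ω} with T ≈ n^{<ω} such that φ(A) ≈ φ(B) whenever A ∪ B ⊆ T and A ≈ B. -/
/-- The meet of two nodes of a tree: the longest common initial segment. -/
def lmeet {α : Type*} [DecidableEq α] : List α → List α → List α
  | a :: s, b :: t => if a = b then a :: lmeet s t else []
  | _, _ => []

/-- The well-order `≺` on the `n`-adic tree: by level, then lexicographically. -/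
def lprec {α : Type*} [LT α] (s t : List α) : Prop :=
  s.length < t.length ∨ (s.length = t.length ∧ List.Lex (· < ·) s t)

/-- A set of nodes is meet-closed. -/
def MeetClosed {α : Type*} [DecidableEq α] (A : Set (List α)) : Prop :=
  ∀ s ∈ A, ∀ t ∈ A, lmeet s t ∈ A

/-- The meet-closure of a set of nodes: the smallest meet-closed set containing it. -/
def mcl {α : Type*} [DecidableEq α] (A : Set (List α)) : Set (List α) :=
  ⋂₀ {B | A ⊆ B ∧ MeetClosed B}

/-- `A ≈ B`: first-move equivalence of subsets of the `n`-adic tree, i.e. a bijection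
between the meet-closures carrying `A` onto `B` and preserving meets, the order `≺`
and first moves. -/
def FME {n : ℕ} (A B : Set (List (Fin n))) : Prop :=
  ∃ f : List (Fin n) → List (Fin n),
    Set.BijOn f (mcl A) (mcl B) ∧ f '' A = B ∧
    ∀ s ∈ mcl A, ∀ t ∈ mcl A,
      f (lmeet s t) = lmeet (f s) (f t) ∧
      (lprec s t ↔ lprec (f s) (f t)) ∧
      ∀ i : Fin n, (s ++ [i]) <+: t → (f s ++ [i]) <+: f t

/-- The standard `(i,j)`-comb `{(j), (i,i,j), (i,i,i,i,j), …}`. -/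
def combSet {n : ℕ} (i j : Fin n) : Set (List (Fin n)) :=
  Set.range fun k : ℕ => List.replicate (2 * k) i ++ [j]

/-- `X` is an `(i,j)`-comb if it is first-move equivalent to the standard comb. -/
def IsComb {n : ℕ} (i j : Fin n) (X : Set (List (Fin n))) : Prop :=
  FME X (combSet i j)

/-- `Γ_S`: the family of all `(i,j)`-combs for `(i,j) ∈ S`. -/
def combFam {n : ℕ} (S : Set (Fin n × Fin n)) : Set (Set (List (Fin n))) :=
  {X | ∃ p ∈ S, IsComb p.1 p.2 X}

/-- Baire measurable: belongs to the σ-algebra generated by open sets and meager sets. -/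
def BaireMeas {α : Type*} [TopologicalSpace α] (s : Set α) : Prop :=
  @MeasurableSet _ (MeasurableSpace.generateFrom {t : Set α | IsOpen t ∨ IsMeagre t}) s

section UltrafilterSemigroup

open Filter

attribute [local instance] Ultrafilter.semigroup

theorem Ultrafilter.map_mul_hom {M N : Type*} [Semigroup M] [Semigroup N] (h : M →ₙ* N)
    (U V : Ultrafilter M) : (U * V).map h = U.map h * V.map h := by
  apply Ultrafilter.coe_inj.mp
  apply Filter.ext'
  intro p
  rw [Ultrafilter.eventually_mul, Ultrafilter.coe_map, Ultrafilter.coe_map, Ultrafilter.coe_map,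
    Filter.eventually_map, Ultrafilter.eventually_mul, Filter.eventually_map]
  simp only [Filter.eventually_map, map_mul]

/-- A compact right topological semigroup has a minimal closed left ideal. -/
theorem exists_minimal_closed_left_ideal {S : Type*} [Semigroup S] [TopologicalSpace S]
    [CompactSpace S] [T2Space S] [Nonempty S] (hc : ∀ r : S, Continuous (· * r)) :
    ∃ L : Set S, IsCompact L ∧ L.Nonempty ∧ (∀ x, ∀ y ∈ L, x * y ∈ L) ∧
      ∀ e ∈ L, ∀ y ∈ L, ∃ x, x * e = y := by
  let P : Set (Set S) := {L | IsClosed L ∧ L.Nonempty ∧ ∀ x, ∀ y ∈ L, x * y ∈ L}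
  obtain ⟨L, hL⟩ : ∃ L, Minimal (· ∈ P) L := by
    refine zorn_superset P fun c hcP hchain => ?_
    rcases c.eq_empty_or_nonempty with rfl | hne
    · exact ⟨Set.univ, ⟨isClosed_univ, Set.univ_nonempty, fun _ _ _ => trivial⟩, by simp⟩
    · refine ⟨⋂₀ c, ⟨isClosed_sInter fun s hs => (hcP hs).1, ?_, ?_⟩,
        fun s hs => Set.sInter_subset_of_mem hs⟩
      · have := hne.to_subtype
        exact IsCompact.nonempty_sInter_of_directed_nonempty_isCompact_isClosed
          (fun a ha b hb => (hchain.total ha hb).elim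
            (fun hab => ⟨a, ha, subset_rfl, hab⟩) fun hba => ⟨b, hb, hba, subset_rfl⟩)
          (fun s hs => (hcP hs).2.1) (fun s hs => (hcP hs).1.isCompact)
          (fun s hs => (hcP hs).1)
      · exact fun x y hy s hs => (hcP hs).2.2 x y (hy s hs)
  obtain ⟨hcl, hne, hid⟩ := hL.prop
  refine ⟨L, hcl.isCompact, hne, hid, fun e he y hy => ?_⟩
  have hP : Set.range (· * e) ∈ P := by
    refine ⟨(isCompact_range (hc e)).isClosed, Set.range_nonempty _, ?_⟩
    rintro x _ ⟨z, rfl⟩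
    exact ⟨x * z, mul_assoc x z e⟩
  have hsub : Set.range (· * e) ⊆ L := by
    rintro _ ⟨z, rfl⟩
    exact hid z e he
  exact hL.le_of_le hP hsub hy

/-- If `M` is a retract of `N` through each of the homomorphisms `h a`, and `I` is a two-sided
ideal of `N`, there is an ultrafilter on `I` whose images under all the retractions `h a` are one
and the same ultrafilter `u`, and which absorbs `u` on the left. -/
theorem exists_ultrafilter_retract {M N κ : Type*} [Semigroup M] [Semigroup N] [Nonempty M]
    (ι : M →ₙ* N) (h : κ → N →ₙ* M) (hι : ∀ a x, h a (ι x) = x) (I : Set N) (hI : I.Nonempty)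
    (hIl : ∀ x, ∀ y ∈ I, x * y ∈ I) (hIr : ∀ x ∈ I, ∀ y, x * y ∈ I) :
    ∃ (u : Ultrafilter M) (v : Ultrafilter N), I ∈ v ∧ u.map ι * v = v ∧
      ∀ a, v.map (h a) = u := by
  obtain ⟨L, hLc, hLne, hLid, hLmin⟩ :=
    exists_minimal_closed_left_ideal (S := Ultrafilter M) Ultrafilter.continuous_mul_left
  obtain ⟨u, huL, huu⟩ := exists_idempotent_in_compact_subsemigroup
    Ultrafilter.continuous_mul_left L hLne hLc fun x _ y hy => hLid x y hy
  set w := u.map ι with hw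
  have hww : w * w = w := by rw [hw, ← Ultrafilter.map_mul_hom, huu]
  let J : Set (Ultrafilter N) := {p | I ∈ p}
  have hJl : ∀ p, ∀ q ∈ J, p * q ∈ J := fun p q hq =>
    (Ultrafilter.eventually_mul p q (· ∈ I)).2
      (Eventually.of_forall fun x => mem_of_superset hq fun y hy => hIl x y hy)
  have hJr : ∀ p ∈ J, ∀ q, p * q ∈ J := fun p hp q =>
    (Ultrafilter.eventually_mul p q (· ∈ I)).2
      (mem_of_superset hp fun x hx => Eventually.of_forall fun y => hIr x hx y)
  obtain ⟨x₀, hx₀⟩ := hI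
  obtain ⟨_, ⟨p, hp, rfl⟩, hv₀⟩ := exists_idempotent_in_compact_subsemigroup
    Ultrafilter.continuous_mul_left ((· * w) '' J)
    ⟨_, (pure x₀ : Ultrafilter N), Ultrafilter.mem_pure.2 hx₀, rfl⟩
    ((ultrafilter_isClosed_basic I).isCompact.image (Ultrafilter.continuous_mul_left w)) (by
      rintro _ ⟨p, hp, rfl⟩ _ ⟨q, hq, rfl⟩
      exact ⟨p * w * q, hJl _ _ hq, mul_assoc _ _ _⟩)
  simp only at hv₀
  set v := w * (p * w) with hv
  have hwv : w * v = v := by rw [hv, ← mul_assoc, hww]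
  have hvw : v * w = v := by simp only [hv, mul_assoc, hww]
  have hvv : v * v = v := by
    calc v * v = w * (p * w * w * (p * w)) := by simp only [hv, mul_assoc]
      _ = w * (p * w * (p * w)) := by rw [mul_assoc p w w, hww]
      _ = v := by rw [hv₀]
  refine ⟨u, v, hJl w (p * w) (hJr p hp w), hwv, fun a => ?_⟩
  have hmap : w.map (h a) = u := by
    rw [hw, Ultrafilter.map_map]
    have : (h a : N → M) ∘ ι = id := funext (hι a)
    rw [this, Ultrafilter.map_id]
  set e := v.map (h a) with he
  have hee : e * e = e := by rw [he, ← Ultrafilter.map_mul_hom, hvv]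
  have hue : u * e = e := by
    conv_lhs => rw [← hmap]
    rw [he, ← Ultrafilter.map_mul_hom, hwv]
  have heu : e * u = e := by
    conv_lhs => rw [← hmap]
    rw [he, ← Ultrafilter.map_mul_hom, hvw]
  obtain ⟨x, hx⟩ := hLmin e (heu ▸ hLid e u huL) u huL
  rw [← hue, ← hx, mul_assoc, hee]

end UltrafilterSemigroup

/-- Substitute the letter `a` for the variable `none` in a variable word. -/
def substVar {Λ : Type*} (q : List (Option Λ)) (a : Λ) : List Λ := q.map fun o => o.getD a

theorem exists_left_split {Λ : Type*} (v : List (Option Λ)) (hv : none ∈ v) :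
    ∃ (p : List Λ) (q : List (Option Λ)), v = p.map some ++ none :: q := by
  induction v with
  | nil => simp at hv
  | cons o v ih =>
    rcases o with _ | a
    · exact ⟨[], v, rfl⟩
    · obtain ⟨p, q, rfl⟩ := ih (by simpa using hv)
      exact ⟨a :: p, q, rfl⟩

section CarlsonSimpson

open Filter

attribute [local instance] Ultrafilter.semigroup

/-- Lists form a semigroup under concatenation. -/
@[reducible] def listSemigroup (α : Type*) : Semigroup (List α) where
  mul := (· ++ ·)
  mul_assoc := List.append_assoc

attribute [local instance] listSemigroup

theorem exists_varWord_ultrafilter (Λ : Type*) :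
    ∃ v : Ultrafilter (List (Option Λ)), (∀ᶠ x : List (Option Λ) in v, none ∈ x) ∧
      ∀ p : List (Option Λ) → Prop, (∀ᶠ x : List (Option Λ) in v, p x) → ∀ a,
        ∀ᶠ x : List (Option Λ) in v, ∀ᶠ y : List (Option Λ) in v,
          p ((substVar x a).map some ++ y) := by
  obtain ⟨u, v, hv, huv, hva⟩ := exists_ultrafilter_retract
    (⟨List.map some, fun _ _ => List.map_append⟩ : List Λ →ₙ* List (Option Λ))
    (fun a : Λ => (⟨fun q => substVar q a, fun _ _ => List.map_append⟩ :
      List (Option Λ) →ₙ* List Λ))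
    (fun a x => by simp [substVar, Function.comp_def])
    {w : List (Option Λ) | none ∈ w} ⟨[none], by simp⟩
    (fun x y hy => List.mem_append_right x hy) (fun x hx y => List.mem_append_left y hx)
  refine ⟨v, hv, fun p hp a => ?_⟩
  rw [← huv, ← hva a] at hp
  exact (Ultrafilter.eventually_mul _ _ _).1 hp

/-- One-step extension property behind the Carlson–Simpson theorem. -/
theorem exists_color_extension {Λ C : Type*} [Finite Λ] [Finite C] (χ : List Λ → C) :
    ∃ (c : C) (D : Set (List Λ)), [] ∈ D ∧ ∀ F : Set (List Λ), F.Finite → F ⊆ D →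
      ∃ (p : List Λ) (q : List (Option Λ)), ∀ w ∈ F,
        χ (w ++ p) = c ∧ ∀ a, w ++ p ++ a :: substVar q a ∈ D := by
  let pre : List (Option Λ) → List Λ := fun v => (v.takeWhile Option.isSome).reduceOption
  have hpre : ∀ p q, pre (p.map some ++ none :: q) = p := by
    intro p q
    induction p with
    | nil => simp [pre]
    | cons a p ih => simp [pre, List.reduceOption]
  obtain ⟨v, hIv, hv⟩ := exists_varWord_ultrafilter Λ
  obtain ⟨c, hc⟩ : ∃ c, ∀ᶠ w : List (Option Λ) in v, χ (pre w) = c :=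
    Ultrafilter.eventually_exists_iff.1 (Eventually.of_forall fun w => ⟨_, rfl⟩)
  let D : Set (List Λ) :=
    {w | ∀ᶠ x : List (Option Λ) in v, χ (pre (w.map some ++ x)) = c}
  refine ⟨c, D, by simpa [D] using hc, fun F hF hFD => ?_⟩
  have hD : ∀ w ∈ D, ∀ a, ∀ᶠ x : List (Option Λ) in v, w ++ substVar x a ∈ D := by
    intro w hw a
    refine (hv _ hw a).mono fun x hx => hx.mono fun y hy => ?_
    rw [← hy, List.map_append, List.append_assoc]
  have hev : ∀ᶠ x : List (Option Λ) in v, none ∈ x ∧ ∀ w ∈ F,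
      χ (pre (w.map some ++ x)) = c ∧ ∀ a, w ++ substVar x a ∈ D := by
    refine Filter.Eventually.and hIv ?_
    rw [eventually_all_finite hF]
    exact fun w hw => Filter.Eventually.and (hFD hw) (eventually_all.2 (hD w (hFD hw)))
  obtain ⟨x, hx, hxF⟩ := hev.exists
  obtain ⟨p, q, rfl⟩ := exists_left_split x hx
  refine ⟨p, q, fun w hw => ?_⟩
  obtain ⟨h1, h2⟩ := hxF w hw
  refine ⟨?_, fun a => ?_⟩
  · rw [← h1, ← List.append_assoc, ← List.map_append, hpre]
  · simpa [substVar] using h2 a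

end CarlsonSimpson
/-- `e` is an embedding of the tree onto a strong subtree whose level function is `ℓ`. -/
def IsStrong {n : ℕ} (ℓ : ℕ → ℕ) (e : List (Fin n) → List (Fin n)) : Prop :=
  (∀ s, (e s).length = ℓ s.length) ∧ ∀ s i, e s ++ [i] <+: e (s ++ [i])

/-- The Halpern–Läuchli theorem for finitely many copies of the `n`-adic tree. -/
theorem halpern_lauchli {n : ℕ} {κ C : Type*} [Finite κ] [Finite C]
    (χ : (κ → List (Fin n)) → C) :
    ∃ (c : C) (ℓ : ℕ → ℕ) (g : κ → List (Fin n) → List (Fin n)), (∀ t, IsStrong ℓ (g t)) ∧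
      ∀ (y : κ → List (Fin n)) (r : ℕ), (∀ t, (y t).length = r) → χ (fun t => g t (y t)) = c := by
  obtain ⟨c, D, hD, hstep⟩ := exists_color_extension
    (fun w : List (κ → Fin n) => χ fun t => w.map (· t))
  choose p q hpq using fun F : {F : Set (List (κ → Fin n)) // F.Finite ∧ F ⊆ D} =>
    hstep F.1 F.2.1 F.2.2
  let next : {F : Set (List (κ → Fin n)) // F.Finite ∧ F ⊆ D} →
      {F : Set (List (κ → Fin n)) // F.Finite ∧ F ⊆ D} := fun F =>
    ⟨(fun x : List (κ → Fin n) × (κ → Fin n) => x.1 ++ p F ++ x.2 :: substVar (q F) x.2) ''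
      (F.1 ×ˢ Set.univ), (F.2.1.prod Set.finite_univ).image _, by
        rintro _ ⟨⟨w, a⟩, ⟨hw, -⟩, rfl⟩
        exact (hpq F w hw).2 a⟩
  let Fs : ℕ → {F : Set (List (κ → Fin n)) // F.Finite ∧ F ⊆ D} := fun k =>
    next^[k] ⟨{[]}, Set.finite_singleton _, by simpa using hD⟩
  have hFs : ∀ k, Fs (k + 1) = next (Fs k) := fun k => Function.iterate_succ_apply' _ _ _
  let P : ℕ → List (κ → Fin n) := fun k => p (Fs k)
  let Q : ℕ → List (Option (κ → Fin n)) := fun k => q (Fs k)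
  let E : List (κ → Fin n) → List (κ → Fin n) := fun w =>
    (w.mapIdx fun k a => P k ++ a :: substVar (Q k) a).flatten
  let G : κ → List (Fin n) → List (Fin n) := fun t s =>
    (s.mapIdx fun k i =>
      (P k).map (· t) ++ i :: (Q k).map (fun o => (o.map (· t)).getD i)).flatten
  have hE : ∀ w, E w ∈ (Fs w.length).1 := by
    intro w
    induction w using List.reverseRecOn with
    | nil => simp [E, Fs]
    | append_singleton w a ih =>
      rw [List.length_append, List.length_singleton, hFs]
      exact ⟨(E w, a), ⟨ih, trivial⟩, by simp [E, P, Q]⟩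
  have hEG : ∀ t w, (E w).map (· t) = G t (w.map (· t)) := by
    intro t w
    induction w using List.reverseRecOn with
    | nil => simp [E, G]
    | append_singleton w a ih =>
      have hsub : ∀ q' : List (Option (κ → Fin n)),
          (substVar q' a).map (· t) = q'.map fun o => (o.map (· t)).getD (a t) := by
        intro q'
        rw [substVar, List.map_map]
        exact List.map_congr_left fun o _ => by cases o <;> rfl
      simp only [E, G] at ih
      simp [E, G, hsub, ih]
  have hlen : ∀ t s, (G t s).length =
      ∑ k ∈ Finset.range s.length, ((P k).length + ((Q k).length + 1)) := by
    intro t s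
    induction s using List.reverseRecOn with
    | nil => simp [G]
    | append_singleton s i ih =>
      simp only [G] at ih
      simp [G, ih, Finset.sum_range_succ]
  refine ⟨c, fun r => ∑ k ∈ Finset.range r, ((P k).length + ((Q k).length + 1)) + (P r).length,
    fun t s => G t s ++ (P s.length).map (· t), fun t => ⟨fun s => by simp [hlen], fun s i => ?_⟩,
    fun y r hy => ?_⟩
  · simp [G]
  · let w : List (κ → Fin n) := List.ofFn fun j : Fin r => fun t => (y t)[j]'(by simp [hy])
    have hw : ∀ t, w.map (· t) = y t := fun t =>
      List.ext_getElem (by simp [w, hy]) fun i h₁ h₂ => by simp [w]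
    have hwr : w.length = r := by simp [w]
    rw [← (hpq (Fs w.length) (E w) (hE w)).1]
    congr 1
    funext t
    rw [List.map_append, hEG, hw, hwr]
    simp only [hy, P]
section TreeMaps

theorem prefix_cases {α : Type*} (s t : List α) :
    s <+: t ∨ t <+: s ∨ ∃ u i j, i ≠ j ∧ u ++ [i] <+: s ∧ u ++ [j] <+: t := by
  classical
  induction s generalizing t with
  | nil => exact Or.inl List.nil_prefix
  | cons a s ih =>
    rcases t with _ | ⟨b, t⟩
    · exact Or.inr (Or.inl List.nil_prefix)
    · by_cases hab : a = b
      · subst hab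
        rcases ih t with h | h | ⟨u, i, j, hij, h₁, h₂⟩
        · exact Or.inl (by simpa using h)
        · exact Or.inr (Or.inl (by simpa using h))
        · exact Or.inr (Or.inr ⟨a :: u, i, j, hij, by simpa using h₁, by simpa using h₂⟩)
      · exact Or.inr (Or.inr ⟨[], a, b, hab, by simp, by simp⟩)

theorem prefix_snoc_of_ne {α : Type*} {s t : List α} (h : s <+: t) (hne : s ≠ t) :
    ∃ i, s ++ [i] <+: t := by
  obtain ⟨_ | ⟨i, r⟩, rfl⟩ := h
  · simp at hne
  · exact ⟨i, r, by simp⟩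

theorem snoc_prefix_unique {α : Type*} {s t : List α} {i j : α} (hi : s ++ [i] <+: t)
    (hj : s ++ [j] <+: t) : i = j := by
  have := List.IsPrefix.eq_of_length (List.prefix_of_prefix_length_le hi hj (by simp)) (by simp)
  simpa using this

variable {α : Type*} {F : List α → List α}

theorem snoc_prefix_map (hF : ∀ s i, F s ++ [i] <+: F (s ++ [i])) {s t : List α} {i : α}
    (h : s ++ [i] <+: t) : F s ++ [i] <+: F t := by
  obtain ⟨r, rfl⟩ := h
  induction r using List.reverseRecOn with
  | nil => simpa using hF s i
  | append_singleton r j ih =>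
    rw [← List.append_assoc]
    exact ih.trans ((List.prefix_append _ _).trans (hF _ j))

theorem prefix_map (hF : ∀ s i, F s ++ [i] <+: F (s ++ [i])) {s t : List α}
    (h : s <+: t) : F s <+: F t := by
  by_cases hst : s = t
  · rw [hst]
  · obtain ⟨i, hi⟩ := prefix_snoc_of_ne h hst
    exact (List.prefix_append _ _).trans (snoc_prefix_map hF hi)

theorem snoc_prefix_map_iff (hF : ∀ s i, F s ++ [i] <+: F (s ++ [i]))
    {s t : List α} {i : α} : F s ++ [i] <+: F t ↔ s ++ [i] <+: t := by
  refine ⟨fun h => ?_, snoc_prefix_map hF⟩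
  have hlen := h.length_le
  simp only [List.length_append, List.length_singleton] at hlen
  rcases prefix_cases s t with h' | h' | ⟨u, a, b, hab, ha, hb⟩
  · obtain ⟨j, hj⟩ := prefix_snoc_of_ne h' (by rintro rfl; omega)
    rwa [snoc_prefix_unique h (snoc_prefix_map hF hj)]
  · have := (prefix_map hF h').length_le
    omega
  · exact absurd (snoc_prefix_unique
      ((snoc_prefix_map hF ha).trans ((List.prefix_append _ _).trans h))
      (snoc_prefix_map hF hb)) hab

end TreeMaps

section Milliken

variable {n : ℕ}

/-- `e` is a strong embedding of the `n`-adic tree into itself. -/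
def StrongEmb (e : List (Fin n) → List (Fin n)) : Prop := ∃ ℓ, IsStrong ℓ e

theorem IsStrong.comp {ℓ ℓ' : ℕ → ℕ} {e e' : List (Fin n) → List (Fin n)} (h : IsStrong ℓ e)
    (h' : IsStrong ℓ' e') : IsStrong (ℓ ∘ ℓ') (e ∘ e') :=
  ⟨fun s => by simp [h.1, h'.1], fun s i => snoc_prefix_map h.2 (h'.2 s i)⟩

theorem StrongEmb.comp {e e' : List (Fin n) → List (Fin n)} (h : StrongEmb e)
    (h' : StrongEmb e') : StrongEmb (e ∘ e') :=
  ⟨_, h.choose_spec.comp h'.choose_spec⟩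

theorem strongEmb_id : StrongEmb (id : List (Fin n) → List (Fin n)) :=
  ⟨id, fun _ => rfl, fun _ _ => List.prefix_rfl⟩

theorem IsStrong.strictMono (i₀ : Fin n) {ℓ : ℕ → ℕ} {e : List (Fin n) → List (Fin n)}
    (h : IsStrong ℓ e) : StrictMono ℓ := by
  refine strictMono_nat_of_lt_succ fun r => ?_
  have := (h.2 (List.replicate r i₀) i₀).length_le
  simp only [List.length_append, h.1, List.length_replicate, List.length_singleton] at this
  omega

/-- The coloring `χ` of strong embeddings depends only on the levels below `k`. -/
def Determined {C : Type*} (k : ℕ) (χ : (List (Fin n) → List (Fin n)) → C) : Prop :=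
  ∀ f g, StrongEmb f → StrongEmb g → (∀ s, s.length < k → f s = g s) → χ f = χ g

/-- The identity below level `j`, and the map `g t` above each node `t` of level `j`. -/
def glue (j : ℕ) (g : {t : List (Fin n) // t.length = j} → List (Fin n) → List (Fin n))
    (s : List (Fin n)) : List (Fin n) :=
  if h : s.length < j then s else
    s.take j ++ g ⟨s.take j, by rw [List.length_take]; omega⟩ (s.drop j)

theorem glue_of_lt {j : ℕ} {g : {t : List (Fin n) // t.length = j} → List (Fin n) → List (Fin n)}
    {s : List (Fin n)} (h : s.length < j) : glue j g s = s := dif_pos h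

theorem glue_append {j : ℕ} {g : {t : List (Fin n) // t.length = j} → List (Fin n) → List (Fin n)}
    (t : {t : List (Fin n) // t.length = j}) (y : List (Fin n)) :
    glue j g (t.1 ++ y) = t.1 ++ g t y := by
  obtain ⟨t, rfl⟩ := t
  simp [glue]

theorem IsStrong.glue {j : ℕ} {ℓ : ℕ → ℕ}
    {g : {t : List (Fin n) // t.length = j} → List (Fin n) → List (Fin n)}
    (hg : ∀ t, IsStrong ℓ (g t)) :
    IsStrong (fun r => if r < j then r else j + ℓ (r - j)) (glue j g) := by
  refine ⟨fun s => ?_, fun s i => ?_⟩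
  · by_cases h : s.length < j
    · simp [glue_of_lt h, h]
    · simp only [_root_.glue, h, dite_false, if_false, List.length_append, List.length_take,
        (hg _).1, List.length_drop]
      omega
  · by_cases h : s.length < j
    · rw [glue_of_lt h]
      by_cases h' : s.length + 1 < j
      · rw [glue_of_lt (by simpa using h')]
      · have := glue_append (g := g) ⟨s ++ [i], by simp; omega⟩ []
        simp only [List.append_nil] at this
        rw [this]
        exact List.prefix_append _ _
    · have hs : s.length ≥ j := by omega
      have h₁ : (s.take j).length = j := by simp [hs]
      have e₁ := glue_append (g := g) ⟨s.take j, h₁⟩ (s.drop j)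
      have e₂ := glue_append (g := g) ⟨s.take j, h₁⟩ (s.drop j ++ [i])
      simp only [← List.append_assoc, List.take_append_drop] at e₁ e₂
      rw [e₁, e₂, List.append_assoc, List.prefix_append_right_inj]
      exact (hg _).2 _ _

/-- The first level at which the tree is still free when a strong embedding with level
function `ℓ` is prescribed below level `k`. -/
def freeLevel (ℓ : ℕ → ℕ) : ℕ → ℕ
  | 0 => 0
  | k + 1 => ℓ k + 1

theorem lt_freeLevel {ℓ : ℕ → ℕ} (hℓ : StrictMono ℓ) {r k : ℕ} (h : r < k) :
    ℓ r < freeLevel ℓ k := by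
  rcases k with _ | k
  · omega
  · have := hℓ.monotone (Nat.le_of_lt_succ h)
    simp only [freeLevel]
    omega

theorem freeLevel_le {ℓ : ℕ → ℕ} (hℓ : StrictMono ℓ) (k : ℕ) : freeLevel ℓ k ≤ ℓ k := by
  rcases k with _ | k
  · exact Nat.zero_le _
  · exact hℓ (Nat.lt_succ_self k)

theorem freeLevel_congr (i₀ : Fin n) {ℓ ℓ' : ℕ → ℕ} {f g : List (Fin n) → List (Fin n)} {k : ℕ}
    (hf : IsStrong ℓ f) (hg : IsStrong ℓ' g) (hfg : ∀ s, s.length < k → f s = g s) :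
    freeLevel ℓ k = freeLevel ℓ' k := by
  rcases k with _ | k
  · rfl
  · have h₁ := hf.1 (List.replicate k i₀)
    have h₂ := hg.1 (List.replicate k i₀)
    rw [hfg _ (by simp), h₂] at h₁
    simpa [freeLevel] using h₁.symm

/-- `f` on the nodes below level `k`, cut down to the free level on the nodes of level `k`. -/
def cut (f : List (Fin n) → List (Fin n)) (k j : ℕ) (s : List (Fin n)) : List (Fin n) :=
  if s.length < k then f s else (f s).take j

/-- Extend a map defined on the nodes of level at most `k` by copying the remaining entries. -/
def extendAbove (k : ℕ) (ρ : List (Fin n) → List (Fin n)) (s : List (Fin n)) : List (Fin n) :=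
  ρ (s.take k) ++ s.drop k

theorem cut_eq_snoc {ℓ : ℕ → ℕ} {f : List (Fin n) → List (Fin n)} {k : ℕ} (hf : IsStrong ℓ f)
    {s : List (Fin n)} (hs : s.length = k) (i : Fin n) :
    (f (s ++ [i])).take (freeLevel ℓ (k + 1)) = f s ++ [i] := by
  have := (List.prefix_iff_eq_take.1 (hf.2 s i))
  rw [this]
  simp [freeLevel, hf.1, hs]

theorem cut_congr {ℓ ℓ' : ℕ → ℕ} {f g : List (Fin n) → List (Fin n)} {k j : ℕ}
    (hf : IsStrong ℓ f) (hg : IsStrong ℓ' g) (hfg : ∀ s, s.length < k → f s = g s)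
    (hj : freeLevel ℓ k = j) (hj' : freeLevel ℓ' k = j) {s : List (Fin n)} (hs : s.length ≤ k) :
    cut f k j s = cut g k j s := by
  rcases Nat.lt_or_eq_of_le hs with h | h
  · simp [cut, h, hfg s h]
  · rcases k with _ | k
    · subst hj
      simp [cut, freeLevel]
    · obtain ⟨s, i, rfl⟩ : ∃ s' i, s = s' ++ [i] := by
        rcases List.eq_nil_or_concat s with rfl | ⟨s', i, rfl⟩
        · simp at h
        · exact ⟨s', i, by simp⟩
      have hs' : s.length = k := by simpa using h
      simp only [cut, h, lt_irrefl, if_false]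
      conv_lhs => rw [← hj]
      conv_rhs => rw [← hj']
      rw [cut_eq_snoc hf hs', cut_eq_snoc hg hs', hfg s (by omega)]

theorem extendAbove_of_le {k : ℕ} {ρ : List (Fin n) → List (Fin n)} {s : List (Fin n)}
    (hs : s.length ≤ k) : extendAbove k ρ s = ρ s := by
  simp [extendAbove, List.take_of_length_le hs, List.drop_of_length_le hs]

theorem strongEmb_extendAbove_cut (i₀ : Fin n) {ℓ : ℕ → ℕ} {f : List (Fin n) → List (Fin n)}
    {k j : ℕ} (hf : IsStrong ℓ f) (hj : freeLevel ℓ k = j) :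
    StrongEmb (extendAbove k (cut f k j)) := by
  have hℓ := hf.strictMono i₀
  refine ⟨fun r => if r < k then ℓ r else j + (r - k), fun s => ?_, fun s i => ?_⟩
  · by_cases h : s.length < k
    · simp [extendAbove_of_le h.le, cut, h, hf.1]
    · have h₁ := freeLevel_le hℓ k
      have h₂ : min k s.length = k := by omega
      simp [extendAbove, cut, h, h₂, hf.1]
      omega
  · by_cases h : s.length < k
    · rw [extendAbove_of_le h.le, extendAbove_of_le (by simpa using h)]
      by_cases h' : s.length + 1 < k
      · simpa [cut, h, h'] using hf.2 s i
      · obtain rfl : k = s.length + 1 := by omega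
        simp only [cut, h, if_true, List.length_append, List.length_singleton, lt_irrefl, if_false,
          ← hj, cut_eq_snoc hf rfl]
        exact List.prefix_rfl
    · have h' : k ≤ s.length := by omega
      simp only [extendAbove, List.take_append_of_le_length h', List.drop_append_of_le_length h']
      rw [← List.append_assoc]

/-- Cutting at the free level separates the nodes of level `k`. -/
theorem take_freeLevel_injective (i₀ : Fin n) {ℓ : ℕ → ℕ} {f : List (Fin n) → List (Fin n)}
    {k : ℕ} (hf : IsStrong ℓ f) {s t : List (Fin n)} (hs : s.length = k) (ht : t.length = k)
    (hst : (f s).take (freeLevel ℓ k) = (f t).take (freeLevel ℓ k)) : s = t := by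
  rcases prefix_cases s t with h | h | ⟨u, i, j, hij, hi, hj⟩
  · exact h.eq_of_length (by omega)
  · exact (h.eq_of_length (by omega)).symm
  · have hu : u.length < k := by simpa [hs] using hi.length_le
    have hlt := lt_freeLevel (hf.strictMono i₀) hu
    have key : ∀ {a : Fin n} {w}, u ++ [a] <+: w →
        f u ++ [a] <+: (f w).take (freeLevel ℓ k) := fun hw =>
      List.prefix_take_iff.2 ⟨snoc_prefix_map hf.2 hw, by simp [hf.1]; omega⟩
    exact absurd (snoc_prefix_unique (key hi) (hst ▸ key hj)) hij

/-- After composing with a suitable `h` that is the identity below level `j`, the color of a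
strong embedding with free level `j` is determined by its values below level `k`. -/
theorem exists_homogeneous_above (i₀ : Fin n) {C : Type*} [Finite C] {k : ℕ} (j : ℕ)
    {χ : (List (Fin n) → List (Fin n)) → C} (hχ : Determined (k + 1) χ)
    {E : List (Fin n) → List (Fin n)} (hE : StrongEmb E) :
    ∃ h, StrongEmb h ∧ (∀ s, s.length < j → h s = s) ∧
      ∀ f g ℓ ℓ', IsStrong ℓ f → IsStrong ℓ' g → (∀ s, s.length < k → f s = g s) →
        freeLevel ℓ k = j → χ ((E ∘ h) ∘ f) = χ ((E ∘ h) ∘ g) := by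
  classical
  have : Finite {t : List (Fin n) // t.length = j} := List.finite_length_eq (Fin n) j
  have : Finite {t : List (Fin n) // t.length ≤ j} := List.finite_length_le (Fin n) j
  have : Finite {s : List (Fin n) // s.length ≤ k} := List.finite_length_le (Fin n) k
  let ext : ({s : List (Fin n) // s.length ≤ k} → {t : List (Fin n) // t.length ≤ j}) →
      List (Fin n) → List (Fin n) := fun ρ =>
    extendAbove k fun s => if hs : s.length ≤ k then (ρ ⟨s, hs⟩).1 else []
  obtain ⟨c, ℓg, g, hg, hc⟩ := halpern_lauchli
    (fun (z : {t : List (Fin n) // t.length = j} → List (Fin n))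
      (ρ : {s : List (Fin n) // s.length ≤ k} → {t : List (Fin n) // t.length ≤ j}) =>
      χ ((E ∘ glue j fun t y => z t ++ y) ∘ ext ρ))
  have hh := IsStrong.glue hg
  have hcut : ∀ f ℓ, IsStrong ℓ f → freeLevel ℓ k = j →
      ∀ s : List (Fin n), s.length ≤ k → (cut f k j s).length ≤ j := by
    intro f ℓ hf hj s _
    unfold cut
    split_ifs with h
    · rw [hf.1, ← hj]
      exact (lt_freeLevel (hf.strictMono i₀) h).le
    · simp
  have main : ∀ f ℓ (hf : IsStrong ℓ f) (hj : freeLevel ℓ k = j),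
      χ ((E ∘ glue j g) ∘ f) = c fun s => ⟨cut f k j s.1, hcut f ℓ hf hj s.1 s.2⟩ := by
    intro f ℓ hf hj
    have hle : j ≤ ℓ k := hj ▸ freeLevel_le (hf.strictMono i₀) k
    let y : {t : List (Fin n) // t.length = j} → List (Fin n) := fun t =>
      if ht : ∃ s : List (Fin n), s.length = k ∧ (f s).take j = t.1 then (f ht.choose).drop j
      else List.replicate (ℓ k - j) i₀
    have hy : ∀ t, (y t).length = ℓ k - j := by
      intro t
      simp only [y]
      split_ifs with ht
      · rw [List.length_drop, hf.1, ht.choose_spec.1]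
      · simp
    have hyf : ∀ s : List (Fin n), s.length = k → ∀ h, y ⟨(f s).take j, h⟩ = (f s).drop j := by
      intro s hs h
      have ht : ∃ s' : List (Fin n), s'.length = k ∧ (f s').take j = (f s).take j := ⟨s, hs, rfl⟩
      have : ht.choose = s := by
        refine take_freeLevel_injective i₀ hf ht.choose_spec.1 hs ?_
        rw [hj]
        exact ht.choose_spec.2
      simp only [y]
      rw [dif_pos ht, this]
    rw [← hc y _ hy]
    have hρ : ext (fun s => ⟨cut f k j s.1, hcut f ℓ hf hj s.1 s.2⟩) =
        extendAbove k (cut f k j) := by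
      funext s
      simp [ext, extendAbove]
    have hz : StrongEmb (glue j fun t x => g t (y t) ++ x) := by
      refine ⟨_, IsStrong.glue (ℓ := fun r => ℓg (ℓ k - j) + r) fun t => ⟨fun s => ?_, ?_⟩⟩
      · rw [List.length_append, (hg t).1, hy]
      · intro s i
        rw [List.append_assoc]
    simp only [hρ]
    refine hχ _ _ ((hE.comp ⟨_, hh⟩).comp ⟨_, hf⟩)
      ((hE.comp hz).comp (strongEmb_extendAbove_cut i₀ hf hj)) fun s hs => ?_
    have hs' : s.length ≤ k := by omega
    simp only [Function.comp_apply, extendAbove_of_le hs']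
    congr 1
    by_cases h : s.length < k
    · have hlt : (f s).length < j := by
        rw [hf.1, ← hj]
        exact lt_freeLevel (hf.strictMono i₀) h
      simp [cut, h, glue_of_lt hlt]
    · have hsk : s.length = k := by omega
      have hlen : ((f s).take j).length = j := by
        rw [List.length_take, hf.1, hsk]
        omega
      have e₁ := glue_append (g := g) ⟨(f s).take j, hlen⟩ ((f s).drop j)
      have e₂ := glue_append (g := fun t x => g t (y t) ++ x) ⟨(f s).take j, hlen⟩ []
      simp only [List.take_append_drop, List.append_nil] at e₁ e₂
      simp only [cut, h, if_false]
      rw [e₁, e₂, hyf s hsk]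
  refine ⟨glue j g, ⟨_, hh⟩, fun s hs => glue_of_lt hs, fun f₁ f₂ ℓ₁ ℓ₂ h₁ h₂ h₁₂ hj => ?_⟩
  have hj₂ : freeLevel ℓ₂ k = j := (freeLevel_congr i₀ h₁ h₂ h₁₂).symm.trans hj
  rw [main f₁ ℓ₁ h₁ hj, main f₂ ℓ₂ h₂ hj₂]
  congr 1
  funext s
  exact Subtype.ext (cut_congr h₁ h₂ h₁₂ hj hj₂ s.2)

/-- A coloring determined by `k + 1` levels becomes determined by `k` levels on a strong
subtree. -/
theorem exists_end_homogeneous (i₀ : Fin n) {C : Type*} [Finite C] {k : ℕ}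
    {χ : (List (Fin n) → List (Fin n)) → C} (hχ : Determined (k + 1) χ) :
    ∃ E, StrongEmb E ∧ Determined k fun f => χ (E ∘ f) := by
  choose h hh hid hhom using fun (j : ℕ) (E : {E : List (Fin n) → List (Fin n) // StrongEmb E}) =>
    exists_homogeneous_above i₀ j hχ E.2
  let Es : ℕ → {E : List (Fin n) → List (Fin n) // StrongEmb E} := fun j =>
    Nat.rec ⟨id, strongEmb_id⟩ (fun j E => ⟨E.1 ∘ h j E, E.2.comp (hh j E)⟩) j
  have hEs : ∀ j, (Es (j + 1)).1 = (Es j).1 ∘ h j (Es j) := fun j => rfl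
  have hstab : ∀ (s : List (Fin n)) J, s.length + 1 ≤ J → (Es J).1 s = (Es (s.length + 1)).1 s := by
    intro s J hJ
    induction J, hJ using Nat.le_induction with
    | base => rfl
    | succ J hJ ih => rw [hEs, Function.comp_apply, hid J _ s (by omega), ih]
  have hpers : ∀ j J, j + 1 ≤ J → ∀ f g ℓ ℓ', IsStrong ℓ f → IsStrong ℓ' g →
      (∀ s, s.length < k → f s = g s) → freeLevel ℓ k = j →
      χ ((Es J).1 ∘ f) = χ ((Es J).1 ∘ g) := by
    intro j J hJ
    induction J, hJ using Nat.le_induction with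
    | base => exact hhom j (Es j)
    | succ J hJ ih =>
      intro f g ℓ ℓ' hf hg hfg hj
      obtain ⟨ℓh, hℓh⟩ := hh J (Es J)
      have hfix : ∀ s : List (Fin n), s.length < k → h J (Es J) (f s) = f s := fun s hs => by
        refine hid J _ _ ?_
        have := lt_freeLevel (hf.strictMono i₀) hs
        rw [hf.1]
        omega
      have hfix' : ∀ s, s.length < k → (h J (Es J) ∘ f) s = f s := hfix
      have hcomp := hℓh.comp hf
      refine ih _ _ _ _ hcomp (hℓh.comp hg) (fun s hs => ?_)
        ((freeLevel_congr i₀ hcomp hf hfix').trans hj)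
      simp only [hfg s hs]
  let E : List (Fin n) → List (Fin n) := fun s => (Es (s.length + 1)).1 s
  have hE : StrongEmb E := by
    refine ⟨fun r => (Es (r + 1)).2.choose r, fun s => (Es (s.length + 1)).2.choose_spec.1 s,
      fun s i => ?_⟩
    have h₁ := hstab s (s.length + 2) (by omega)
    have h₂ := (Es (s.length + 2)).2.choose_spec.2 s i
    simp only [E, List.length_append, List.length_singleton]
    rwa [← h₁]
  refine ⟨E, hE, fun f g hf hg hfg => ?_⟩
  obtain ⟨ℓ, hℓ⟩ := hf
  obtain ⟨ℓg, hℓg⟩ := hg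
  let J := freeLevel ℓ k + ℓ k + ℓg k + 1
  have hJ : ∀ f' ℓ'', IsStrong ℓ'' f' → ℓ'' k + 1 ≤ J → χ (E ∘ f') = χ ((Es J).1 ∘ f') := by
    intro f' ℓ'' hf' hJ
    refine hχ _ _ (hE.comp ⟨_, hf'⟩) ((Es J).2.comp ⟨_, hf'⟩) fun s hs => ?_
    have hmono := (hf'.strictMono i₀).monotone (Nat.le_of_lt_succ hs)
    exact (hstab (f' s) J (by rw [hf'.1]; omega)).symm
  change χ (E ∘ f) = χ (E ∘ g)
  rw [hJ f ℓ hℓ (by omega), hJ g ℓg hℓg (by omega)]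
  exact hpers _ J (by omega) f g ℓ ℓg hℓ hℓg hfg rfl

/-- Milliken's theorem. -/
theorem milliken (i₀ : Fin n) {C : Type*} [Finite C] (k : ℕ)
    (χ : (List (Fin n) → List (Fin n)) → C) (hχ : Determined k χ) :
    ∃ E, StrongEmb E ∧ ∀ f g, StrongEmb f → StrongEmb g → χ (E ∘ f) = χ (E ∘ g) := by
  induction k generalizing χ with
  | zero => exact ⟨id, strongEmb_id, fun f g hf hg => hχ _ _ hf hg fun s hs => by omega⟩
  | succ k ih =>
    obtain ⟨E, hE, hEχ⟩ := exists_end_homogeneous i₀ hχ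
    obtain ⟨E', hE', hconst⟩ := ih _ hEχ
    exact ⟨E ∘ E', hE.comp hE', hconst⟩

end Milliken

section Meets

variable {α : Type*} [DecidableEq α]

theorem lmeet_prefix_left (s t : List α) : lmeet s t <+: s := by
  fun_induction lmeet s t with
  | case1 a s t ih => simpa using ih
  | case2 => exact List.nil_prefix
  | case3 => exact List.nil_prefix

theorem lmeet_prefix_right (s t : List α) : lmeet s t <+: t := by
  fun_induction lmeet s t with
  | case1 a s t ih => simpa using ih
  | case2 => exact List.nil_prefix
  | case3 => exact List.nil_prefix

theorem prefix_lmeet {u s t : List α} (hs : u <+: s) (ht : u <+: t) : u <+: lmeet s t := by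
  obtain ⟨s', rfl⟩ := hs
  obtain ⟨t', rfl⟩ := ht
  induction u with
  | nil => exact List.nil_prefix
  | cons a u ih => simpa [lmeet] using ih

theorem lmeet_eq_left {s t : List α} (h : s <+: t) : lmeet s t = s :=
  (lmeet_prefix_left s t).eq_of_length_le (prefix_lmeet List.prefix_rfl h).length_le

theorem lmeet_eq_right {s t : List α} (h : t <+: s) : lmeet s t = t :=
  (lmeet_prefix_right s t).eq_of_length_le (prefix_lmeet h List.prefix_rfl).length_le

theorem lmeet_self (s : List α) : lmeet s s = s := lmeet_eq_left List.prefix_rfl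

theorem lmeet_eq_of_branch {u s t : List α} {i j : α} (hij : i ≠ j) (hs : u ++ [i] <+: s)
    (ht : u ++ [j] <+: t) : lmeet s t = u := by
  obtain ⟨s', rfl⟩ := hs
  obtain ⟨t', rfl⟩ := ht
  induction u with
  | nil => simp [lmeet, hij]
  | cons a u ih => simpa [lmeet] using ih

theorem lmeet_lmeet_mem (a b c d : List α) :
    lmeet (lmeet a b) (lmeet c d) = lmeet a b ∨ lmeet (lmeet a b) (lmeet c d) = lmeet c d ∨
      lmeet (lmeet a b) (lmeet c d) = lmeet a c := by
  rcases prefix_cases (lmeet a b) (lmeet c d) with h | h | ⟨u, i, j, hij, hi, hj⟩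
  · exact Or.inl (lmeet_eq_left h)
  · exact Or.inr (Or.inl (lmeet_eq_right h))
  · refine Or.inr (Or.inr ?_)
    rw [lmeet_eq_of_branch hij hi hj, lmeet_eq_of_branch hij (hi.trans (lmeet_prefix_left a b))
      (hj.trans (lmeet_prefix_left c d))]

theorem subset_mcl (A : Set (List α)) : A ⊆ mcl A := Set.subset_sInter fun _ hB => hB.1

theorem meetClosed_mcl (A : Set (List α)) : MeetClosed (mcl A) := fun s hs t ht B hB =>
  hB.2 s (hs B hB) t (ht B hB)

theorem mcl_range {ι : Type*} (x : ι → List α) :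
    mcl (Set.range x) = Set.range fun p : ι × ι => lmeet (x p.1) (x p.2) := by
  apply Set.Subset.antisymm
  · refine Set.sInter_subset_of_mem ⟨?_, ?_⟩
    · rintro _ ⟨i, rfl⟩
      exact ⟨(i, i), lmeet_self _⟩
    · rintro _ ⟨⟨i, j⟩, rfl⟩ _ ⟨⟨k, l⟩, rfl⟩
      rcases lmeet_lmeet_mem (x i) (x j) (x k) (x l) with h | h | h
      · exact ⟨(i, j), h.symm⟩
      · exact ⟨(k, l), h.symm⟩
      · exact ⟨(i, k), h.symm⟩
  · rintro _ ⟨⟨i, j⟩, rfl⟩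
    exact meetClosed_mcl _ _ (subset_mcl _ (Set.mem_range_self i)) _
      (subset_mcl _ (Set.mem_range_self j))

theorem lmeet_map {F : List α → List α} (hF : ∀ s i, F s ++ [i] <+: F (s ++ [i]))
    (s t : List α) : F (lmeet s t) = lmeet (F s) (F t) := by
  rcases prefix_cases s t with h | h | ⟨u, i, j, hij, hi, hj⟩
  · rw [lmeet_eq_left h, lmeet_eq_left (prefix_map hF h)]
  · rw [lmeet_eq_right h, lmeet_eq_right (prefix_map hF h)]
  · rw [lmeet_eq_of_branch hij hi hj,
      lmeet_eq_of_branch hij (snoc_prefix_map hF hi) (snoc_prefix_map hF hj)]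

end Meets

section Rank

variable {n : ℕ}

/-- The position of a node in the order `≺`. -/
def rank (s : List (Fin n)) : ℕ := s.foldl (fun r i => n * r + i + 1) 0

@[simp] theorem rank_nil : rank ([] : List (Fin n)) = 0 := rfl

@[simp] theorem rank_snoc (s : List (Fin n)) (i : Fin n) : rank (s ++ [i]) = n * rank s + i + 1 := by
  simp [rank]

theorem lex_snoc {s t : List (Fin n)} (h : s.length = t.length) (i j : Fin n) :
    List.Lex (· < ·) (s ++ [i]) (t ++ [j]) ↔ List.Lex (· < ·) s t ∨ (s = t ∧ i < j) := by
  induction s generalizing t with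
  | nil =>
    obtain rfl : t = [] := by simpa using h.symm
    simp [List.cons_lex_cons_iff]
  | cons a s ih =>
    rcases t with _ | ⟨b, t⟩
    · simp at h
    · have := ih (t := t) (by simpa using h)
      simp only [List.cons_append, List.cons_lex_cons_iff, this, List.cons.injEq]
      tauto

theorem lprec_snoc (s t : List (Fin n)) (i j : Fin n) :
    lprec (s ++ [i]) (t ++ [j]) ↔ lprec s t ∨ (s = t ∧ i < j) := by
  unfold lprec
  by_cases h : s.length = t.length
  · simp [h, lex_snoc h]
  · have : s ≠ t := fun hst => h (hst ▸ rfl)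
    simp [h, this]

theorem rank_lt_or_eq_or_gt (s t : List (Fin n)) :
    (lprec s t ∧ rank s < rank t) ∨ s = t ∨ (lprec t s ∧ rank t < rank s) := by
  induction s using List.reverseRecOn generalizing t with
  | nil =>
    rcases List.eq_nil_or_concat t with rfl | ⟨t, j, rfl⟩
    · simp
    · exact Or.inl ⟨Or.inl (by simp), by simp⟩
  | append_singleton s i ih =>
    rcases List.eq_nil_or_concat t with rfl | ⟨t, j, rfl⟩
    · exact Or.inr (Or.inr ⟨Or.inl (by simp), by simp⟩)
    · rw [List.concat_eq_append]
      have hi := i.2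
      have hj := j.2
      simp only [lprec_snoc, rank_snoc]
      rcases ih t with ⟨h₁, h₂⟩ | rfl | ⟨h₁, h₂⟩
      · have : n * (rank s + 1) ≤ n * rank t := Nat.mul_le_mul_left n h₂
        exact Or.inl ⟨Or.inl h₁, by rw [mul_add] at this; omega⟩
      · rcases lt_trichotomy i j with h | rfl | h
        · exact Or.inl ⟨Or.inr ⟨rfl, h⟩, by omega⟩
        · exact Or.inr (Or.inl rfl)
        · exact Or.inr (Or.inr ⟨Or.inr ⟨rfl, h⟩, by omega⟩)
      · have : n * (rank t + 1) ≤ n * rank s := Nat.mul_le_mul_left n h₂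
        exact Or.inr (Or.inr ⟨Or.inl h₁, by rw [mul_add] at this; omega⟩)

theorem rank_lt_of_lprec {s t : List (Fin n)} (h : lprec s t) : rank s < rank t := by
  have irrefl : ∀ u : List (Fin n), ¬ List.Lex (· < ·) u u := fun u hu =>
    (List.lt_irrefl u) hu
  have asymm : ∀ u v : List (Fin n), lprec u v → ¬ lprec v u := by
    rintro u v (h₁ | ⟨h₁, h₁'⟩) (h₂ | ⟨h₂, h₂'⟩)
    · omega
    · omega
    · omega
    · exact List.lt_asymm (show u < v from h₁') h₂'
  rcases rank_lt_or_eq_or_gt s t with h' | rfl | h'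
  · exact h'.2
  · exact absurd h (asymm _ _ h)
  · exact absurd h (asymm _ _ h'.1)

theorem lprec_iff_rank_lt {s t : List (Fin n)} : lprec s t ↔ rank s < rank t := by
  refine ⟨rank_lt_of_lprec, fun h => ?_⟩
  rcases rank_lt_or_eq_or_gt s t with h' | rfl | h'
  · exact h'.1
  · omega
  · omega

theorem rank_injective : Function.Injective (rank : List (Fin n) → ℕ) := by
  intro s t h
  rcases rank_lt_or_eq_or_gt s t with h' | h' | h'
  · omega
  · exact h'
  · omega

theorem rank_lt_rank_snoc (hn : 0 < n) (s : List (Fin n)) (i : Fin n) :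
    rank s < rank (s ++ [i]) := by
  rw [rank_snoc]
  have := Nat.le_mul_of_pos_left (rank s) hn
  omega

end Rank

section Codes

variable {n : ℕ}

/-- The relative position of the meets `a ∧ b` and `c ∧ d`: the order `≺` and first moves. -/
def code (a b c d : List (Fin n)) : Prop × (Fin n → Prop) :=
  (lprec (lmeet a b) (lmeet c d), fun i => lmeet a b ++ [i] <+: lmeet c d)

theorem code_map {F : List (Fin n) → List (Fin n)} (hF : ∀ s i, F s ++ [i] <+: F (s ++ [i]))
    (hF' : ∀ s t, lprec (F s) (F t) ↔ lprec s t) (a b c d : List (Fin n)) :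
    code (F a) (F b) (F c) (F d) = code a b c d := by
  simp only [code, ← lmeet_map hF, hF', snoc_prefix_map_iff hF]

theorem FME.exists_code_eq {A B : Set (List (Fin n))} (h : FME A B) :
    ∃ f : List (Fin n) → List (Fin n), f '' A = B ∧ ∀ a ∈ A, ∀ b ∈ A, ∀ c ∈ A, ∀ d ∈ A,
      code (f a) (f b) (f c) (f d) = code a b c d := by
  obtain ⟨f, hf, hAB, hfm⟩ := h
  refine ⟨f, hAB, fun a ha b hb c hc d hd => ?_⟩
  have hA := subset_mcl A
  have hs := meetClosed_mcl A a (hA ha) b (hA hb)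
  have ht := meetClosed_mcl A c (hA hc) d (hA hd)
  rw [code, code, ← (hfm a (hA ha) b (hA hb)).1, ← (hfm c (hA hc) d (hA hd)).1]
  generalize lmeet a b = s at *
  generalize lmeet c d = t at *
  refine Prod.ext (propext (hfm s hs t ht).2.1.symm) (funext fun i => propext ⟨fun h => ?_, ?_⟩)
  · have hst : lmeet s t = s := hf.injOn (meetClosed_mcl A s hs t ht) hs
      ((hfm s hs t ht).1.trans (lmeet_eq_left ((List.prefix_append _ _).trans h)))
    have hne : s ≠ t := by
      rintro rfl
      have := h.length_le
      simp at this
    obtain ⟨j, hj⟩ := prefix_snoc_of_ne (hst ▸ lmeet_prefix_right s t) hne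
    rwa [snoc_prefix_unique h ((hfm s hs t ht).2.2 j hj)]
  · exact (hfm s hs t ht).2.2 i

theorem prefix_iff_eq_or_snoc {α : Type*} {s t : List α} :
    s <+: t ↔ s = t ∨ ∃ i, s ++ [i] <+: t := by
  constructor
  · intro h
    by_cases hst : s = t
    · exact Or.inl hst
    · exact Or.inr (prefix_snoc_of_ne h hst)
  · rintro (rfl | ⟨i, hi⟩)
    · exact List.prefix_rfl
    · exact (List.prefix_append _ _).trans hi

theorem prefix_antisymm {α : Type*} {s t : List α} (h : s <+: t) (h' : t <+: s) : s = t :=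
  h.eq_of_length_le h'.length_le

theorem FME.of_code_eq {ι : Type*} {x y : ι → List (Fin n)}
    (h : ∀ i j k l, code (x i) (x j) (x k) (x l) = code (y i) (y j) (y k) (y l)) :
    FME (Set.range x) (Set.range y) := by
  classical
  let X : ι × ι → List (Fin n) := fun p => lmeet (x p.1) (x p.2)
  let Y : ι × ι → List (Fin n) := fun p => lmeet (y p.1) (y p.2)
  have hlt : ∀ p q, lprec (X p) (X q) ↔ lprec (Y p) (Y q) := fun p q =>
    iff_of_eq (congrArg Prod.fst (h p.1 p.2 q.1 q.2))
  have hsnoc : ∀ p q i, X p ++ [i] <+: X q ↔ Y p ++ [i] <+: Y q := fun p q i =>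
    iff_of_eq (congrFun (congrArg Prod.snd (h p.1 p.2 q.1 q.2)) i)
  have heq : ∀ p q, X p = X q ↔ Y p = Y q := by
    intro p q
    have h₁ := hlt p q
    have h₂ := hlt q p
    rw [lprec_iff_rank_lt, lprec_iff_rank_lt] at h₁ h₂
    rw [← rank_injective.eq_iff, ← rank_injective.eq_iff (a := Y p)]
    omega
  have hpre : ∀ p q, X p <+: X q ↔ Y p <+: Y q := by
    intro p q
    rw [prefix_iff_eq_or_snoc, prefix_iff_eq_or_snoc, heq]
    simp only [hsnoc]
  have hX : mcl (Set.range x) = Set.range X := mcl_range x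
  have hY : mcl (Set.range y) = Set.range Y := mcl_range y
  let f : List (Fin n) → List (Fin n) := fun s => if h : ∃ p, X p = s then Y h.choose else []
  have hf : ∀ p, f (X p) = Y p := by
    intro p
    have hp : ∃ q, X q = X p := ⟨p, rfl⟩
    simp only [f, dif_pos hp]
    exact (heq _ _).1 hp.choose_spec
  have hfx : ∀ i, f (x i) = y i := fun i => by
    simpa only [X, Y, lmeet_self] using hf (i, i)
  refine ⟨f, ?_, ?_, ?_⟩
  · rw [hX, hY]
    refine ⟨?_, ?_, ?_⟩
    · rintro _ ⟨p, rfl⟩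
      exact ⟨p, (hf p).symm⟩
    · rintro _ ⟨p, rfl⟩ _ ⟨q, rfl⟩ hpq
      rw [hf, hf] at hpq
      exact (heq p q).2 hpq
    · rintro _ ⟨p, rfl⟩
      exact ⟨X p, ⟨p, rfl⟩, hf p⟩
  · rw [← Set.range_comp]
    exact congrArg Set.range (funext hfx)
  · intro s hs t ht
    obtain ⟨r, hr⟩ := hX ▸ meetClosed_mcl _ s hs t ht
    rw [hX] at hs ht
    obtain ⟨p, rfl⟩ := hs
    obtain ⟨q, rfl⟩ := ht
    rw [← hr, hf, hf, hf]
    refine ⟨?_, hlt p q, fun i => (hsnoc p q i).1⟩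
    obtain ⟨r', hr'⟩ : lmeet (Y p) (Y q) ∈ Set.range Y :=
      hY ▸ meetClosed_mcl _ _ (hY ▸ Set.mem_range_self p) _ (hY ▸ Set.mem_range_self q)
    rw [← hr']
    apply prefix_antisymm
    · rw [hr']
      exact prefix_lmeet ((hpre _ _).1 (hr ▸ lmeet_prefix_left _ _))
        ((hpre _ _).1 (hr ▸ lmeet_prefix_right _ _))
    · rw [← hpre, hr]
      exact prefix_lmeet ((hpre _ _).2 (hr' ▸ lmeet_prefix_left _ _))
        ((hpre _ _).2 (hr' ▸ lmeet_prefix_right _ _))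

theorem lprec_of_branch {u s t : List (Fin n)} {i j : Fin n} (hij : i ≠ j)
    (hs : u ++ [i] <+: s) (ht : u ++ [j] <+: t) (h : s.length = t.length) :
    lprec s t ↔ i < j := by
  obtain ⟨s', rfl⟩ := hs
  obtain ⟨t', rfl⟩ := ht
  simp only [lprec, h, lt_irrefl, true_and, false_or]
  clear h
  simp only [List.append_assoc, List.singleton_append]
  induction u with
  | nil => simp [List.cons_lex_cons_iff, hij]
  | cons a u ih => simpa [List.cons_lex_cons_iff] using ih

theorem IsStrong.lprec_iff {ℓ : ℕ → ℕ} {e : List (Fin n) → List (Fin n)} (he : IsStrong ℓ e)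
    (i₀ : Fin n) (s t : List (Fin n)) : lprec (e s) (e t) ↔ lprec s t := by
  have hℓ := he.strictMono i₀
  by_cases hlen : s.length = t.length
  · have hlen' : (e s).length = (e t).length := by rw [he.1, he.1, hlen]
    rcases prefix_cases s t with h | h | ⟨u, i, j, hij, hi, hj⟩
    · rw [h.eq_of_length hlen, lprec_iff_rank_lt, lprec_iff_rank_lt, lt_self_iff_false,
        lt_self_iff_false]
    · rw [h.eq_of_length hlen.symm, lprec_iff_rank_lt, lprec_iff_rank_lt, lt_self_iff_false,
        lt_self_iff_false]
    · rw [lprec_of_branch hij hi hj hlen,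
        lprec_of_branch hij (snoc_prefix_map he.2 hi) (snoc_prefix_map he.2 hj) hlen']
  · simp [lprec, he.1, hlen, hℓ.lt_iff_lt, hℓ.injective.eq_iff]

end Codes

section Skew

variable {n : ℕ}

open Classical in
/-- The move that `s` makes at the node of rank `r`, if `s` properly extends that node, and `i₀`
otherwise. -/
noncomputable def moveAt (i₀ : Fin n) (s : List (Fin n)) (r : ℕ) : Fin n :=
  if h : ∃ a, ∃ u, rank u = r ∧ u ++ [a] <+: s then h.choose else i₀

/-- The embedding of the tree that sends the node of rank `r` to level `r`. -/
noncomputable def skew (i₀ : Fin n) (s : List (Fin n)) : List (Fin n) :=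
  (List.range (rank s)).map (moveAt i₀ s)

theorem moveAt_of_snoc_prefix (i₀ : Fin n) {s u : List (Fin n)} {a : Fin n}
    (h : u ++ [a] <+: s) : moveAt i₀ s (rank u) = a := by
  have hex : ∃ a, ∃ v, rank v = rank u ∧ v ++ [a] <+: s := ⟨a, u, rfl, h⟩
  rw [moveAt, dif_pos hex]
  obtain ⟨v, hv, hpre⟩ := hex.choose_spec
  rw [rank_injective hv] at hpre
  exact snoc_prefix_unique hpre h

theorem moveAt_of_forall_not (i₀ : Fin n) {s u : List (Fin n)}
    (h : ∀ a, ¬ u ++ [a] <+: s) : moveAt i₀ s (rank u) = i₀ := by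
  refine dif_neg ?_
  rintro ⟨a, v, hv, hpre⟩
  exact h a (rank_injective hv ▸ hpre)

theorem moveAt_congr (i₀ : Fin n) {s t u v : List (Fin n)}
    (h : ∀ a, u ++ [a] <+: s ↔ v ++ [a] <+: t) :
    moveAt i₀ s (rank u) = moveAt i₀ t (rank v) := by
  by_cases hs : ∃ a, u ++ [a] <+: s
  · obtain ⟨a, ha⟩ := hs
    rw [moveAt_of_snoc_prefix i₀ ha, moveAt_of_snoc_prefix i₀ ((h a).1 ha)]
  · push Not at hs
    rw [moveAt_of_forall_not i₀ hs, moveAt_of_forall_not i₀ fun a ha => hs a ((h a).2 ha)]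

@[simp] theorem length_skew (i₀ : Fin n) (s : List (Fin n)) : (skew i₀ s).length = rank s := by
  simp [skew]

theorem skew_snoc (i₀ : Fin n) (s : List (Fin n)) (i : Fin n) :
    skew i₀ s ++ [i] <+: skew i₀ (s ++ [i]) := by
  have hlt := rank_lt_rank_snoc i₀.pos s i
  have heq : skew i₀ s ++ [i] = (List.range (rank s + 1)).map (moveAt i₀ (s ++ [i])) := by
    rw [List.range_succ, List.map_append, List.map_singleton,
      moveAt_of_snoc_prefix i₀ List.prefix_rfl, skew]
    congr 1
    refine List.map_congr_left fun r hr => ?_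
    have hr' : r < rank s := List.mem_range.1 hr
    have key : ∀ a, (∃ u, rank u = r ∧ u ++ [a] <+: s) ↔
        ∃ u, rank u = r ∧ u ++ [a] <+: s ++ [i] := by
      intro a
      refine exists_congr fun u => and_congr_right fun hu => ?_
      rw [List.prefix_concat_iff]
      refine ⟨Or.inr, fun h => h.resolve_left fun h => ?_⟩
      obtain ⟨rfl, -⟩ := List.append_inj' h rfl
      omega
    classical
    exact congrArg (fun Q : Fin n → Prop => if h : ∃ a, Q a then h.choose else i₀)
      (funext fun a => propext (key a))
  obtain ⟨d, hd⟩ := Nat.exists_eq_add_of_le hlt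
  rw [heq]
  conv_rhs => rw [skew, hd, List.range_add, List.map_append]
  exact List.prefix_append _ _

theorem lmeet_skew (i₀ : Fin n) (s t : List (Fin n)) :
    lmeet (skew i₀ s) (skew i₀ t) = skew i₀ (lmeet s t) :=
  (lmeet_map (skew_snoc i₀) s t).symm

theorem lprec_skew (i₀ : Fin n) (s t : List (Fin n)) :
    lprec (skew i₀ s) (skew i₀ t) ↔ lprec s t := by
  rw [lprec_iff_rank_lt (s := s)]
  refine ⟨?_, fun h => Or.inl (by simpa using h)⟩
  rintro (h | ⟨h, h'⟩)
  · simpa using h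
  · obtain rfl := rank_injective (by simpa using h : rank s = rank t)
    exact absurd h' (List.lt_irrefl _)

end Skew

section Envelope

variable {n : ℕ} {ι : Type*}

open Classical in
/-- Auxiliary to `envelope`: the recursion runs along the reversal of a node. -/
noncomputable def envelopeRev (i₀ : Fin n) (ℓ : ℕ → ℕ) (x θ : ι → List (Fin n)) :
    List (Fin n) → List (Fin n)
  | [] => if h : ∃ i, [] <+: θ i then (x h.choose).take (ℓ 0) else List.replicate (ℓ 0) i₀
  | a :: t =>
    if h : ∃ i, (a :: t).reverse <+: θ i then (x h.choose).take (ℓ (t.length + 1))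
    else envelopeRev i₀ ℓ x θ t ++ a :: List.replicate (ℓ (t.length + 1) - ℓ t.length - 1) i₀

/-- A strong embedding with level function `ℓ` which sends `θ i` to `x i`. -/
noncomputable def envelope (i₀ : Fin n) (ℓ : ℕ → ℕ) (x θ : ι → List (Fin n))
    (s : List (Fin n)) : List (Fin n) :=
  envelopeRev i₀ ℓ x θ s.reverse

theorem envelope_of_prefix (i₀ : Fin n) {ℓ : ℕ → ℕ} {x θ : ι → List (Fin n)}
    (hx : ∀ i j t, t <+: θ i → t <+: θ j → (x i).take (ℓ t.length) = (x j).take (ℓ t.length))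
    {t : List (Fin n)} {i : ι} (h : t <+: θ i) :
    envelope i₀ ℓ x θ t = (x i).take (ℓ t.length) := by
  rcases List.eq_nil_or_concat t with rfl | ⟨t, a, rfl⟩
  · have hex : ∃ i, [] <+: θ i := ⟨i, h⟩
    simp only [envelope, List.reverse_nil, envelopeRev, dif_pos hex]
    exact hx _ _ _ hex.choose_spec h
  · rw [List.concat_eq_append] at h ⊢
    have hex : ∃ i, (a :: t.reverse).reverse <+: θ i := ⟨i, by simpa using h⟩
    simp only [envelope, List.reverse_append, List.reverse_singleton, List.singleton_append,
      envelopeRev, dif_pos hex, List.length_reverse, List.length_append, List.length_singleton]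
    have := hx _ _ _ hex.choose_spec (by simpa using h)
    simpa using this

theorem envelope_snoc_of_not (i₀ : Fin n) {ℓ : ℕ → ℕ} {x θ : ι → List (Fin n)}
    {t : List (Fin n)} {a : Fin n} (h : ¬ ∃ i, t ++ [a] <+: θ i) :
    envelope i₀ ℓ x θ (t ++ [a]) = envelope i₀ ℓ x θ t ++
      a :: List.replicate (ℓ (t.length + 1) - ℓ t.length - 1) i₀ := by
  have hex : ¬ ∃ i, (a :: t.reverse).reverse <+: θ i := by simpa using h
  simp only [envelope, List.reverse_append, List.reverse_singleton, List.singleton_append,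
      envelopeRev, dif_neg hex, List.length_reverse]

theorem isStrong_envelope (i₀ : Fin n) {ℓ : ℕ → ℕ} (hℓ : StrictMono ℓ)
    {x θ : ι → List (Fin n)} (hlen : ∀ i, (x i).length = ℓ (θ i).length)
    (hθ : ∀ i (t : List (Fin n)) a, t ++ [a] <+: θ i → (x i)[ℓ t.length]? = some a)
    (hx : ∀ i j t, t <+: θ i → t <+: θ j → (x i).take (ℓ t.length) = (x j).take (ℓ t.length)) :
    IsStrong ℓ (envelope i₀ ℓ x θ) := by
  have hpre : ∀ i (t : List (Fin n)), t <+: θ i →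
      (envelope i₀ ℓ x θ t).length = ℓ t.length := by
    intro i t h
    rw [envelope_of_prefix i₀ hx h, List.length_take, hlen]
    exact min_eq_left (hℓ.monotone h.length_le)
  refine ⟨fun s => ?_, fun s a => ?_⟩
  · induction s using List.reverseRecOn with
    | nil =>
      by_cases h : ∃ i, [] <+: θ i
      · exact hpre _ _ h.choose_spec
      · simp [envelope, envelopeRev, dif_neg h]
    | append_singleton t a ih =>
      by_cases h : ∃ i, t ++ [a] <+: θ i
      · exact hpre _ _ h.choose_spec
      · have := hℓ (Nat.lt_succ_self t.length)
        simp only [envelope_snoc_of_not i₀ h, List.length_append, ih, List.length_cons,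
          List.length_replicate, List.length_nil, Nat.zero_add, Nat.succ_eq_add_one] at this ⊢
        omega
  · by_cases h : ∃ i, s ++ [a] <+: θ i
    · obtain ⟨i, hi⟩ := h
      rw [envelope_of_prefix i₀ hx hi,
        envelope_of_prefix i₀ hx ((List.prefix_append _ _).trans hi)]
      have hsome := hθ i s a hi
      have : (x i).take (ℓ s.length) ++ [a] = (x i).take (ℓ s.length + 1) := by
        rw [List.take_add_one, hsome]
        rfl
      rw [this]
      exact List.take_prefix_take_left (by simpa using hℓ (Nat.lt_succ_self s.length))
    · rw [envelope_snoc_of_not i₀ h]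
      exact ⟨_, by rw [List.append_assoc, List.singleton_append]⟩

open Classical in
/-- The sequence of moves which `s` makes at the levels in `P`. -/
noncomputable def trace (i₀ : Fin n) (P : ℕ → Prop) (s : List (Fin n)) : List (Fin n) :=
  (List.range (Nat.count P s.length)).map fun r => s.getD (Nat.nth P r) i₀

open Classical in
theorem getElem?_nth_of_snoc_prefix_trace (i₀ : Fin n) {P : ℕ → Prop} {s t : List (Fin n)}
    {a : Fin n} (h : t ++ [a] <+: trace i₀ P s) : s[Nat.nth P t.length]? = some a := by
  have hlen := h.length_le
  simp only [trace, List.length_append, List.length_singleton, List.length_map,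
    List.length_range] at hlen
  have hlt : Nat.nth P t.length < s.length := Nat.nth_lt_of_lt_count hlen
  obtain ⟨r, hr⟩ := h
  have : (trace i₀ P s)[t.length]? = some a := by rw [← hr]; simp
  rw [trace, List.getElem?_map, List.getElem?_range hlen] at this
  simpa [List.getD_eq_getElem?_getD, hlt] using this

open Classical in
theorem exists_strongEmb_trace (i₀ : Fin n) (x : ι → List (Fin n)) {P : ℕ → Prop}
    (hinf : {r | P r}.Infinite) (hP : ∀ i j, P (lmeet (x i) (x j)).length) :
    ∃ e, StrongEmb e ∧ ∀ i, e (trace i₀ P (x i)) = x i := by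
  have hℓ := Nat.nth_strictMono hinf
  have hlen : ∀ i, (x i).length = Nat.nth P (trace i₀ P (x i)).length := by
    intro i
    have := hP i i
    rw [lmeet_self] at this
    simp [trace, Nat.nth_count this]
  have hx : ∀ i j t, t <+: trace i₀ P (x i) → t <+: trace i₀ P (x j) →
      (x i).take (Nat.nth P t.length) = (x j).take (Nat.nth P t.length) := by
    intro i j t hi hj
    have hi' := hlen i ▸ hℓ.monotone hi.length_le
    have hj' := hlen j ▸ hℓ.monotone hj.length_le
    rcases prefix_cases (x i) (x j) with ⟨r, hr⟩ | ⟨r, hr⟩ | ⟨u, a, b, hab, ha, hb⟩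
    · rw [← hr, List.take_append_of_le_length hi']
    · rw [← hr, List.take_append_of_le_length hj']
    · have hu : P u.length := lmeet_eq_of_branch hab ha hb ▸ hP i j
      have hnth : Nat.nth P (Nat.count P u.length) = u.length := Nat.nth_count hu
      rcases le_or_gt (Nat.nth P t.length) u.length with hle | hlt
      · obtain ⟨r, hr⟩ := (List.prefix_append _ _).trans ha
        obtain ⟨r', hr'⟩ := (List.prefix_append _ _).trans hb
        rw [← hr, ← hr', List.take_append_of_le_length hle, List.take_append_of_le_length hle]
      · have hk : Nat.count P u.length < t.length := hℓ.lt_iff_lt.1 (hnth.trans_lt hlt)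
        set k := Nat.count P u.length
        have hpre : t.take k ++ [t[k]] <+: t := by
          rw [← List.take_succ_eq_append_getElem hk]
          exact List.take_prefix _ _
        have h₁ := getElem?_nth_of_snoc_prefix_trace i₀ (hpre.trans hi)
        have h₂ := getElem?_nth_of_snoc_prefix_trace i₀ (hpre.trans hj)
        rw [List.length_take, min_eq_left hk.le, hnth] at h₁ h₂
        obtain ⟨r, hr⟩ := ha
        obtain ⟨r', hr'⟩ := hb
        rw [← hr] at h₁
        rw [← hr'] at h₂
        simp only [List.append_assoc, List.singleton_append, le_refl, List.getElem?_append_right,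
          Nat.sub_self, List.getElem?_cons_zero, Option.some.injEq] at h₁ h₂
        exact absurd (h₁.trans h₂.symm) hab
  refine ⟨envelope i₀ (Nat.nth P) x fun i => trace i₀ P (x i), ⟨_, isStrong_envelope i₀ hℓ hlen
    (fun i t a => getElem?_nth_of_snoc_prefix_trace i₀) hx⟩, fun i => ?_⟩
  rw [envelope_of_prefix i₀ hx List.prefix_rfl, ← hlen, List.take_length]

end Envelope

section Pattern

theorem card_image_eq_of_eq_iff {β γ δ : Type*} [DecidableEq β] [DecidableEq γ] [DecidableEq δ]
    (s : Finset β) {f : β → γ} {g : β → δ} (h : ∀ a b, f a = f b ↔ g a = g b) :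
    (s.image f).card = (s.image g).card := by
  induction s using Finset.induction_on with
  | empty => simp
  | insert a s _ ih =>
    have : f a ∈ s.image f ↔ g a ∈ s.image g := by simp only [Finset.mem_image, h]
    by_cases hf : f a ∈ s.image f
    · rw [Finset.image_insert, Finset.image_insert, Finset.insert_eq_of_mem hf,
        Finset.insert_eq_of_mem (this.1 hf), ih]
    · rw [Finset.image_insert, Finset.image_insert, Finset.card_insert_of_notMem hf,
        Finset.card_insert_of_notMem (fun hg => hf (this.2 hg)), ih]

variable {n : ℕ} {ι : Type*}

/-- The rank of the meet of two members of the family `p`. -/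
def meetRank (p : ι → List (Fin n)) (k : ι × ι) : ℕ := rank (lmeet (p k.1) (p k.2))

theorem meetRank_diag (p : ι → List (Fin n)) (i : ι) : meetRank p (i, i) = rank (p i) := by
  rw [meetRank, lmeet_self]

/-- The levels occupied by the meets of the family `p`, and all the levels above them. -/
def meetLevel (p : ι → List (Fin n)) (r : ℕ) : Prop :=
  (∃ k, meetRank p k = r) ∨ ∀ k, meetRank p k < r

variable [Fintype ι]

theorem infinite_meetLevel (p : ι → List (Fin n)) : {r | meetLevel p r}.Infinite := by
  refine Set.infinite_of_not_bddAbove ?_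
  rintro ⟨N, hN⟩
  obtain ⟨M, hM⟩ := (Set.finite_range (meetRank p)).bddAbove
  have : meetLevel p (max M N + 1) := Or.inr fun k => by
    have := hM (Set.mem_range_self k)
    omega
  have := hN this
  omega

open Classical in
theorem count_meetLevel (p : ι → List (Fin n)) (k : ι × ι) :
    Nat.count (meetLevel p) (meetRank p k) =
      ((Finset.univ.filter fun k' => meetRank p k' < meetRank p k).image (meetRank p)).card := by
  rw [Nat.count_eq_card_filter_range]
  congr 1
  ext r
  simp only [Finset.mem_filter, Finset.mem_range, Finset.mem_image, Finset.mem_univ, true_and]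
  constructor
  · rintro ⟨hr, ⟨k', rfl⟩ | h⟩
    · exact ⟨k', hr, rfl⟩
    · exact absurd (h k) hr.not_gt
  · rintro ⟨k', hk', rfl⟩
    exact ⟨hk', Or.inl ⟨k', rfl⟩⟩

theorem length_trace_skew_le (i₀ : Fin n) (p : ι → List (Fin n)) (i : ι) :
    (trace i₀ (meetLevel p) (skew i₀ (p i))).length ≤ Fintype.card (ι × ι) := by
  classical
  rw [trace, List.length_map, List.length_range, length_skew, ← meetRank_diag, count_meetLevel]
  exact Finset.card_image_le.trans (Finset.card_le_univ _)

theorem getD_skew (i₀ : Fin n) (s : List (Fin n)) {r : ℕ} (h : r < rank s) :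
    (skew i₀ s).getD r i₀ = moveAt i₀ s r := by
  simp [skew, List.getD_eq_getElem?_getD, List.getElem?_range h]

open Classical in
theorem trace_skew_eq (i₀ : Fin n) {p q : ι → List (Fin n)}
    (h : ∀ i j k l, code (p i) (p j) (p k) (p l) = code (q i) (q j) (q k) (q l)) (i : ι) :
    trace i₀ (meetLevel p) (skew i₀ (p i)) = trace i₀ (meetLevel q) (skew i₀ (q i)) := by
  have hlt : ∀ k k', meetRank p k < meetRank p k' ↔ meetRank q k < meetRank q k' := by
    intro k k'
    simpa only [code, meetRank, ← lprec_iff_rank_lt] using iff_of_eq (congrArg Prod.fst (h k.1 k.2 k'.1 k'.2))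
  have heq : ∀ k k', meetRank p k = meetRank p k' ↔ meetRank q k = meetRank q k' := by
    intro k k'
    have := hlt k k'
    have := hlt k' k
    omega
  have hcount : ∀ k, Nat.count (meetLevel p) (meetRank p k) =
      Nat.count (meetLevel q) (meetRank q k) := by
    intro k
    rw [count_meetLevel, count_meetLevel, card_image_eq_of_eq_iff _ heq]
    simp only [hlt]
  rw [trace, trace, length_skew, length_skew, ← meetRank_diag, ← meetRank_diag q, hcount]
  refine List.map_congr_left fun r hr => ?_
  have hrq : r < Nat.count (meetLevel q) (meetRank q (i, i)) := List.mem_range.1 hr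
  have hrp := (hcount (i, i)).symm ▸ hrq
  have hnth := Nat.nth_lt_of_lt_count hrp
  obtain ⟨k, hk⟩ : ∃ k, meetRank p k = Nat.nth (meetLevel p) r :=
    (Nat.nth_mem_of_infinite (infinite_meetLevel p) r).resolve_right
      fun h' => (h' (i, i)).not_gt hnth
  have hr' : r = Nat.count (meetLevel p) (meetRank p k) := by
    rw [hk, Nat.count_nth_of_infinite (infinite_meetLevel p)]
  have hk' : Nat.nth (meetLevel q) r = meetRank q k := by
    rw [hr', hcount]
    exact Nat.nth_count (Or.inl ⟨k, rfl⟩)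
  rw [← hk] at hnth ⊢
  rw [hk', getD_skew i₀ _ (meetRank_diag p i ▸ hnth),
    getD_skew i₀ _ (meetRank_diag q i ▸ (hlt _ _).1 hnth)]
  refine moveAt_congr i₀ fun a => ?_
  have := congrFun (congrArg Prod.snd (h k.1 k.2 i i)) a
  simp only [code, lmeet_self] at this
  exact iff_of_eq this

theorem exists_common_pattern (i₀ : Fin n) {p q : ι → List (Fin n)}
    (h : ∀ i j k l, code (p i) (p j) (p k) (p l) = code (q i) (q j) (q k) (q l)) :
    ∃ (e e' : List (Fin n) → List (Fin n)) (θ : ι → List (Fin n)), StrongEmb e ∧ StrongEmb e' ∧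
      ∀ i, (θ i).length ≤ Fintype.card (ι × ι) ∧ e (θ i) = skew i₀ (p i) ∧
        e' (θ i) = skew i₀ (q i) := by
  have key : ∀ p : ι → List (Fin n), ∃ e, StrongEmb e ∧
      ∀ i, e (trace i₀ (meetLevel p) (skew i₀ (p i))) = skew i₀ (p i) := fun p =>
    exists_strongEmb_trace i₀ (fun i => skew i₀ (p i)) (infinite_meetLevel p) fun i j =>
      Or.inl ⟨(i, j), by rw [lmeet_skew, length_skew, meetRank]⟩
  obtain ⟨e, he, hep⟩ := key p
  obtain ⟨e', he', heq⟩ := key q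
  exact ⟨e, e', _, he, he', fun i => ⟨length_trace_skew_le i₀ p i, hep i,
    trace_skew_eq i₀ h i ▸ heq i⟩⟩

end Pattern

theorem FME.refl {n : ℕ} (A : Set (List (Fin n))) : FME A A := by
  have h : FME (Set.range ((↑) : A → List (Fin n))) (Set.range ((↑) : A → List (Fin n))) :=
    FME.of_code_eq fun _ _ _ _ => rfl
  rwa [Subtype.range_coe] at h

theorem exists_code_homogeneous {n m : ℕ} (i₀ : Fin n) (K : ℕ)
    (φ : List (Fin n) → List (Fin m)) :
    ∃ E, StrongEmb E ∧ ∀ f g, StrongEmb f → StrongEmb g → ∀ θ : Fin 4 → List (Fin n),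
      (∀ i, (θ i).length < K) →
      code (φ (E (f (θ 0)))) (φ (E (f (θ 1)))) (φ (E (f (θ 2)))) (φ (E (f (θ 3)))) =
        code (φ (E (g (θ 0)))) (φ (E (g (θ 1)))) (φ (E (g (θ 2)))) (φ (E (g (θ 3)))) := by
  have : Finite {l : List (Fin n) // l.length < K} := (List.finite_length_lt (Fin n) K).to_subtype
  obtain ⟨E, hE, hom⟩ := milliken i₀ K
    (fun (f : List (Fin n) → List (Fin n)) (θ : Fin 4 → {l : List (Fin n) // l.length < K}) =>
      code (φ (f (θ 0))) (φ (f (θ 1))) (φ (f (θ 2))) (φ (f (θ 3))))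
    (fun f g _ _ hfg => funext fun θ => by
      simp only [hfg _ (θ 0).2, hfg _ (θ 1).2, hfg _ (θ 2).2, hfg _ (θ 3).2])
  exact ⟨E, hE, fun f g hf hg θ hθ => congrFun (hom f g hf hg) fun i => ⟨θ i, hθ i⟩⟩

/-- for every φ : n^{<ω} → m^{<ω} there is a first-move copy T of the
n-adic tree on which φ preserves first-move equivalence. -/
theorem statement_13 (n m : ℕ) (φ : List (Fin n) → List (Fin m)) :
    ∃ T : Set (List (Fin n)), FME T Set.univ ∧
      ∀ A B : Set (List (Fin n)), A ∪ B ⊆ T → FME A B →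
        FME (φ '' A) (φ '' B) := by
  rcases Nat.eq_zero_or_pos n with rfl | hn
  · refine ⟨Set.univ, FME.refl _, fun A B _ h => ?_⟩
    obtain ⟨f, rfl, -⟩ := h.exists_code_eq
    have hf : f = id := funext fun s => Subsingleton.elim _ _
    rw [hf, Set.image_id]
    exact FME.refl _
  · let i₀ : Fin n := ⟨0, hn⟩
    obtain ⟨E, ⟨ℓ, hE⟩, hom⟩ := exists_code_homogeneous i₀ 17 φ
    have hcode : ∀ a b c d, code (E (skew i₀ a)) (E (skew i₀ b)) (E (skew i₀ c)) (E (skew i₀ d)) =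
        code a b c d := fun a b c d => by
      rw [code_map hE.2 (hE.lprec_iff i₀), code_map (skew_snoc i₀) (lprec_skew i₀)]
    refine ⟨Set.range fun s => E (skew i₀ s), ?_, fun A B hAB h => ?_⟩
    · rw [← Set.range_id]
      exact FME.of_code_eq hcode
    · obtain ⟨f, rfl, hf⟩ := h.exists_code_eq
      choose! p hp using fun a (ha : a ∈ A) => hAB (Or.inl ha)
      choose! q hq using fun a (ha : a ∈ A) => hAB (Or.inr (Set.mem_image_of_mem f ha))
      simp only at hp hq
      have hA : φ '' A = Set.range fun a : A => φ a := by
        rw [Set.image_eq_range]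
      have hB : φ '' (f '' A) = Set.range fun a : A => φ (f a) := by
        rw [Set.image_image, Set.image_eq_range]
      rw [hA, hB]
      refine FME.of_code_eq fun a b c d => ?_
      let v : Fin 4 → A := ![a, b, c, d]
      obtain ⟨e, e', θ, he, he', hθ⟩ := exists_common_pattern i₀
        (p := fun k => p (v k)) (q := fun k => q (v k)) fun i j k l => by
          rw [← hcode, ← hcode (q (v i)), hp _ (v i).2, hp _ (v j).2, hp _ (v k).2, hp _ (v l).2,
            hq _ (v i).2, hq _ (v j).2, hq _ (v k).2, hq _ (v l).2,
            hf _ (v i).2 _ (v j).2 _ (v k).2 _ (v l).2]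
      have := hom e e' he he' θ fun i => Nat.lt_succ_of_le (hθ i).1
      simp only [(hθ _).2.1, (hθ _).2.2, hp _ (v _).2, hq _ (v _).2] at this
      exact this
end
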